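/- For every integer n ≥ 13 the polynomial X^n − 2X^{n−1} − X + 1 has a root λ_n in the open interval (1/2, 1), and for any such root λ_n the Bernoulli convolution with parameter λ_n is absolutely continuous with respect to Lebesgue measure on ℝ. -/

import Mathlib

open MeasureTheory Real

/-- The Bernoulli convolution with parameter `λ`: the law of `∑ₙ Xₙ λⁿ` with `Xₙ` i.i.d.
uniform on `{±1}`, realized by extracting the (i.i.d. fair) binary digits of a
uniform point of `[0,1)`. -/
noncomputable def bernoulliConv (lam : ℝ) : Measure ℝ :=
  Measure.map
    (fun x => ∑' n : ℕ, (if ⌊x * 2 ^ (n + 1)⌋ % 2 = 1 then (1 : ℝ) else -1) * lam ^ n)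
    (volume.restrict (Set.Ico (0 : ℝ) 1))

section BA

/-- rising factorial -/
noncomputable def bcRise (x : ℝ) : ℕ → ℝ
  | 0 => 1
  | (i+1) => bcRise x i * (x + i)

lemma bcRise_pos {x : ℝ} (hx : 0 < x) (i : ℕ) : 0 < bcRise x i := by
  induction i with
  | zero => simp [bcRise]
  | succ i ih => simp only [bcRise]; positivity

lemma bcRise_succ' (x : ℝ) (i : ℕ) : bcRise x (i+1) = x * bcRise (x+1) i := by
  induction i with
  | zero => simp [bcRise]
  | succ i ih =>
    rw [bcRise, ih, bcRise]; push_cast; ring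

lemma bcRise_tele {x : ℝ} (hx : 0 < x) (i : ℕ) :
    1 / bcRise x (i+1) - 1 / bcRise (x+1) (i+1) = (i+1) / bcRise x (i+2) := by
  have h1 := bcRise_pos (by linarith : 0 < x + 1) i
  have e1 : bcRise x (i+1) = x * bcRise (x+1) i := bcRise_succ' x i
  have e2 : bcRise (x+1) (i+1) = bcRise (x+1) i * (x+1+i) := rfl
  have e3 : bcRise x (i+2) = x * (bcRise (x+1) i * (x+1+i)) := by rw [bcRise_succ']; rfl
  rw [e1, e2, e3]
  have : 0 < x + 1 + i := by positivity
  field_simp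
  ring

lemma bcRise_le {x : ℝ} (hx : 0 < x) (k i : ℕ) (hi : i ≤ k) : bcRise x i ≤ (x + k) ^ i := by
  induction i with
  | zero => simp [bcRise]
  | succ i ih =>
    rw [bcRise, pow_succ]
    have hik : (i:ℝ) ≤ k := by exact_mod_cast (by omega : i ≤ k)
    have := bcRise_pos hx i
    gcongr
    exact ih (by omega)

lemma bc_rec_sum (D : ℕ → ℕ → ℝ) (hD : ∀ i m, D i m ≤ D (i+1) m + D i (m+1)) (i m j : ℕ) :
    D i m ≤ ∑ l ∈ Finset.range j, D (i+1) (m + l) + D i (m + j) := by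
  induction j with
  | zero => simp
  | succ j ih =>
    rw [Finset.sum_range_succ]
    have := hD i (m+j)
    rw [← add_assoc m j 1]
    linarith

lemma bc_rec (D : ℕ → ℕ → ℝ) (k R : ℕ) (ε : ℝ) (hε : 0 ≤ ε) (hk : 1 ≤ k) (hR : 1 ≤ R)
    (hD : ∀ i m, D i m ≤ D (i+1) m + D i (m+1))
    (hb : ∀ m ≤ R, D k m ≤ (ε * k / (m + 4 * k)) ^ k)
    (hc : ∀ i, 1 ≤ i → i ≤ k → D i R ≤ ((k:ℝ) / R) ^ i) :
    D 1 0 ≤ (exp 1 * ε) ^ k / 3 + (k:ℝ) ^ (k+1) / R := by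
  have hk0 : (0:ℝ) < k := by exact_mod_cast hk
  have hR0 : (0:ℝ) < R := by exact_mod_cast hR
  have key : ∀ j, j ≤ k - 1 → ∀ m ≤ R, D (k - j) m ≤
      (ε * k) ^ k * ((k-1-j).factorial / (k-1).factorial) / bcRise (m + 3 * k) (k-j)
        + j * (k:ℝ)^k / (R:ℝ)^(k-j) := by
    intro j
    induction j with
    | zero =>
      intro _ m hm
      simp only [Nat.sub_zero, Nat.cast_zero, zero_mul, zero_div, add_zero]
      rw [div_self (by positivity), mul_one]
      refine (hb m hm).trans ?_
      rw [div_pow]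
      have hp : (0:ℝ) < m + 3 * k := by positivity
      have := bcRise_le hp k k le_rfl
      have h2 := bcRise_pos hp k
      gcongr
      refine this.trans (le_of_eq ?_)
      ring
    | succ j ih =>
      intro hj m hm
      have ih := ih (by omega)
      have h1 := bc_rec_sum D hD (k - (j+1)) m (R - m)
      obtain ⟨i, hi⟩ : ∃ i, k - (j+1) = i + 1 := ⟨k - (j+1) - 1, by omega⟩
      have hi2 : k - j = i + 2 := by omega
      have hi3 : k - 1 - j = i + 1 := by omega
      have hi4 : k - 1 - (j+1) = i := by omega
      rw [hi2, hi3] at ih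
      rw [hi] at h1 ⊢
      rw [hi4]
      have hmR : m + (R - m) = R := by omega
      rw [hmR] at h1
      have h2 := hc (i+1) (by omega) (by omega)
      have h3 : ∑ l ∈ Finset.range (R - m), D (i+1+1) (m + l) ≤
          ∑ l ∈ Finset.range (R - m), ((ε * k) ^ k * ((i+1).factorial / (k-1).factorial) / bcRise ((m + l : ℕ) + 3 * k) (i+2) + j * (k:ℝ)^k / (R:ℝ)^(i+2)) := by
        apply Finset.sum_le_sum
        intro l hl
        rw [Finset.mem_range] at hl
        exact ih (m + l) (by omega)
      rw [Finset.sum_add_distrib] at h3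
      have h4 : ∑ l ∈ Finset.range (R - m), (ε * k) ^ k * ((i+1).factorial / (k-1).factorial) / bcRise ((m + l : ℕ) + 3 * k) (i+2)
          ≤ (ε * k) ^ k * ((i).factorial / (k-1).factorial) / bcRise (m + 3 * k) (i+1) := by
        have : ∀ l : ℕ, (ε * k) ^ k * ((i+1).factorial / (k-1).factorial) / bcRise ((m + l : ℕ) + 3 * k) (i+2)
            = (ε * k) ^ k * ((i).factorial / (k-1).factorial) *
              ((1 / bcRise (m + 3 * k + (l:ℕ)) (i+1)) - (1 / bcRise (m + 3 * k + (l+1:ℕ)) (i+1))) := by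
          intro l
          have hp : (0:ℝ) < m + 3 * k + l := by positivity
          have := bcRise_tele hp i
          push_cast
          rw [← add_assoc, this, Nat.factorial_succ]
          push_cast
          rw [show (m:ℝ) + l + 3 * k = m + 3 * k + l by ring]
          ring
        simp_rw [this]
        rw [← Finset.mul_sum]
        have hs := Finset.sum_range_sub' (fun l : ℕ => 1 / bcRise ((m:ℝ) + 3 * k + (l:ℕ)) (i+1)) (R - m)
        rw [hs]
        have hp : (0:ℝ) < m + 3 * k + (R - m : ℕ) := by positivity
        have := bcRise_pos hp (i+1)
        rw [mul_sub]
        have h5 : 0 ≤ (ε * k) ^ k * ((i).factorial / (k-1).factorial) * (1 / bcRise (m + 3 * k + (R - m : ℕ)) (i+1)) := by positivity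
        simp only [Nat.cast_zero, add_zero]
        rw [mul_one_div]
        linarith
      have h6 : ∑ l ∈ Finset.range (R - m), j * (k:ℝ)^k / (R:ℝ)^(i+2) ≤ j * (k:ℝ)^k / (R:ℝ)^(i+1) := by
        rw [Finset.sum_const, Finset.card_range, nsmul_eq_mul]
        have : ((R - m : ℕ):ℝ) ≤ R := by exact_mod_cast Nat.sub_le _ _
        calc ((R - m : ℕ):ℝ) * (j * (k:ℝ)^k / (R:ℝ)^(i+2)) ≤ R * (j * (k:ℝ)^k / (R:ℝ)^(i+2)) := by gcongr
          _ = _ := by field_simp; ring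
      have h7 : ((k:ℝ) / R) ^ (i+1) ≤ (k:ℝ)^k / (R:ℝ)^(i+1) := by
        rw [div_pow]
        gcongr
        · exact_mod_cast hk
        · omega
      push_cast
      have e : ((j:ℝ)+1) * (k:ℝ)^k / (R:ℝ)^(i+1) = j * (k:ℝ)^k / (R:ℝ)^(i+1) + (k:ℝ)^k / (R:ℝ)^(i+1) := by ring
      rw [e]
      linarith
  have h := key (k-1) le_rfl 0 (by omega)
  rw [show k - (k-1) = 1 by omega] at h
  simp only [Nat.sub_self, Nat.factorial_zero, Nat.cast_one, Nat.cast_zero, zero_add, pow_one] at h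
  refine h.trans ?_
  have e1 : bcRise (3 * (k:ℝ)) 1 = 3 * k := by simp [bcRise]
  rw [e1]
  have h8 := Real.pow_div_factorial_le_exp (k:ℝ) hk0.le k
  have h9 : (exp 1 * ε) ^ k = exp k * ε ^ k := by
    rw [mul_pow, ← Real.exp_nat_mul, mul_one]
  have h10 : (k.factorial : ℝ) = k * (k-1).factorial := by
    exact_mod_cast (Nat.mul_factorial_pred (by omega : k ≠ 0)).symm
  apply add_le_add
  · rw [h9]
    have : (ε * k) ^ k * (1 / ((k-1).factorial:ℝ)) / (3 * k) = ((k:ℝ)^k / k.factorial) * ε ^ k / 3 := by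
      rw [h10, mul_pow]; field_simp
    rw [this]
    gcongr
  · have : ((k-1:ℕ):ℝ) ≤ k := by exact_mod_cast Nat.sub_le _ _
    rw [pow_succ, mul_comm ((k:ℝ)^k)]
    gcongr

end BA

section B1

lemma bc_beta (m : ℕ) (hm : 12 ≤ m) :
    ∃ β : ℝ, 2 < β ∧ β ≤ 2.001 ∧ β ^ m * (β - 2) = β - 1 := by
  have hc : ContinuousOn (fun x : ℝ => x ^ m * (x - 2) - (x - 1)) (Set.Icc 2 2.001) := by fun_prop
  have h := intermediate_value_Icc (by norm_num) hc
  have h0 : (0:ℝ) ∈ Set.Icc ((2:ℝ) ^ m * (2 - 2) - (2 - 1)) ((2.001:ℝ) ^ m * (2.001 - 2) - (2.001 - 1)) := by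
    constructor
    · norm_num
    · have : (2:ℝ)^12 ≤ 2.001 ^ m := by
        calc (2:ℝ)^12 ≤ 2 ^ m := pow_le_pow_right₀ (by norm_num) hm
          _ ≤ _ := by gcongr; norm_num
      nlinarith
  obtain ⟨b, hb, hb0⟩ := h h0
  refine ⟨b, lt_of_le_of_ne hb.1 ?_, hb.2, by simp at hb0; linarith⟩
  rintro rfl
  norm_num at hb0

lemma bc_root_exists (m : ℕ) (hm : 12 ≤ m) :
    ∃ lam ∈ Set.Ioo (1 / 2 : ℝ) 1, lam ^ (m+1) - 2 * lam ^ m - lam + 1 = 0 := by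
  have hc : ContinuousOn (fun x : ℝ => x ^ (m+1) - 2 * x ^ m - x + 1) (Set.Icc (1/2) 1) := by fun_prop
  have h := intermediate_value_Ioo' (by norm_num) hc
  have h0 : (0:ℝ) ∈ Set.Ioo ((1:ℝ) ^ (m+1) - 2 * 1 ^ m - 1 + 1) ((1/2:ℝ) ^ (m+1) - 2 * (1/2) ^ m - (1/2) + 1) := by
    constructor
    · norm_num
    · have : (1/2:ℝ)^m ≤ (1/2)^12 := pow_le_pow_of_le_one (by norm_num) (by norm_num) hm
      have h2 : (0:ℝ) < (1/2)^m := by positivity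
      rw [pow_succ]
      nlinarith
  obtain ⟨b, hb, hb0⟩ := h h0
  exact ⟨b, hb, hb0⟩

lemma bc_lam_lb (m : ℕ) (hm : 12 ≤ m) (x : ℝ) (hx : x ∈ Set.Ioo (1/2:ℝ) 1)
    (h : x ^ m * (x - 2) = x - 1) : 1 / 2 ≤ x ^ 4 := by
  have h1 : x ^ m ≤ x ^ 12 := pow_le_pow_of_le_one (by linarith [hx.1]) hx.2.le hm
  have hx0 : 0 < x := by linarith [hx.1]
  by_contra hcon
  push Not at hcon
  have h2 : x ^ 12 ≤ 1/8 := by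
    calc x ^ 12 = (x^4)^3 := by ring
      _ ≤ (1/2)^3 := by gcongr
      _ = 1/8 := by norm_num
  have h3 : x < 0.841 := by
    by_contra h4
    push Not at h4
    have : (0.841:ℝ)^4 ≤ x^4 := by gcongr
    norm_num at this
    linarith
  nlinarith [hx.2]

lemma bc_pow_sub (u v : ℂ) (r : ℝ) (hu : ‖u‖ ≤ r) (hv : ‖v‖ ≤ r) (k : ℕ) :
    ‖u ^ (k+1) - v ^ (k+1)‖ ≤ (k+1) * r ^ k * ‖u - v‖ := by
  have hr : 0 ≤ r := (norm_nonneg _).trans hu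
  induction k with
  | zero => simp
  | succ k ih =>
    have e : u ^ (k+1+1) - v ^ (k+1+1) = u * (u ^ (k+1) - v ^ (k+1)) + (u - v) * v ^ (k+1) := by ring
    rw [e]
    refine (norm_add_le _ _).trans ?_
    rw [norm_mul, norm_mul, norm_pow]
    have h1 : ‖u‖ * ‖u ^ (k+1) - v ^ (k+1)‖ ≤ r * ((k+1) * r ^ k * ‖u - v‖) := by gcongr
    have h2 : ‖u - v‖ * ‖v‖ ^ (k+1) ≤ ‖u - v‖ * r ^ (k+1) := by gcongr
    push_cast
    calc _ ≤ _ := add_le_add h1 h2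
      _ = _ := by ring

lemma bc_pow_small (k : ℕ) : ((k:ℝ) + 12) * (2/3) ^ (k+12) ≤ 1/5 := by
  induction k with
  | zero => norm_num
  | succ k ih =>
    refine le_trans ?_ ih
    rw [show k + 1 + 12 = (k+12) + 1 by ring, pow_succ]
    have : (0:ℝ) < (2/3)^(k+12) := by positivity
    have hk : (0:ℝ) ≤ k := by positivity
    push_cast
    nlinarith [mul_nonneg hk this.le]

lemma bc_roots (m : ℕ) (hm : 12 ≤ m) (β : ℝ) (hβ : 2 < β) (hβ0 : β ^ m * (β - 2) = β - 1)
    (z : ℂ) (hz : z ^ m * (z - 2) = z - 1) (hz1 : 1 ≤ ‖z‖) : z = β := by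
  have hz2 : z ≠ 2 := by rintro rfl; norm_num at hz
  by_cases hre : z.re < 3/2
  · exfalso
    have h1 : ‖z - 1‖ < ‖z - 2‖ := by
      rw [← sq_lt_sq₀ (norm_nonneg _) (norm_nonneg _), ← Complex.normSq_eq_norm_sq, ← Complex.normSq_eq_norm_sq,
        Complex.normSq_apply, Complex.normSq_apply]
      simp
      nlinarith
    have h2 : ‖z‖ ^ m * ‖z - 2‖ = ‖z - 1‖ := by rw [← hz, norm_mul, norm_pow]
    have h3 : 1 ≤ ‖z‖ ^ m := one_le_pow₀ hz1
    nlinarith [norm_nonneg (z - 2)]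
  · push Not at hre
    have hzn : 3/2 ≤ ‖z‖ := hre.trans (Complex.re_le_norm z)
    have hz0 : z ≠ 0 := by rintro rfl; norm_num at hzn
    have hb0 : (β:ℂ) ≠ 0 := by exact_mod_cast (by linarith : β ≠ 0)
    have hβ0' : (β:ℂ) ^ m * (β - 2) = β - 1 := by exact_mod_cast hβ0
    obtain ⟨j, rfl⟩ : ∃ j, m = j + 12 := ⟨m - 12, by omega⟩
    have key : ∀ w : ℂ, w ≠ 0 → w ^ (j+12) * (w - 2) = w - 1 → w = 2 + (w⁻¹)^(j+10+1) - (w⁻¹)^(j+11+1) := by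
      intro w hw h
      have ha : (w⁻¹)^(j+10+1) * w^(j+11) = 1 := by
        rw [← mul_pow, inv_mul_cancel₀ hw, one_pow]
      rw [show j+11+1 = (j+10+1)+1 by ring, pow_succ (w⁻¹) (j+10+1)]
      generalize (w⁻¹)^(j+10+1) = a at ha ⊢
      rw [pow_succ] at h
      have h2 : w * (w - 2) = a * (w - 1) := by linear_combination a * h - w * (w-2) * ha
      field_simp
      linear_combination h2
    have k1 := key z hz0 hz
    have k2 := key β hb0 hβ0'
    set u := z⁻¹ with hu
    set v := (β:ℂ)⁻¹ with hv
    have hu1 : ‖u‖ ≤ 2/3 := by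
      rw [hu, norm_inv, show (2/3:ℝ) = (3/2)⁻¹ by norm_num]
      exact inv_anti₀ (by norm_num) hzn
    have hv1 : ‖v‖ ≤ 2/3 := by
      rw [hv, norm_inv, show (2/3:ℝ) = (3/2)⁻¹ by norm_num]
      refine inv_anti₀ (by norm_num) ?_
      rw [Complex.norm_real, Real.norm_eq_abs, abs_of_pos (by linarith)]
      linarith
    have e : v - u = u * v * ((u ^ (j+10+1) - v ^ (j+10+1)) - (u ^ (j+11+1) - v ^ (j+11+1))) := by
      have : (u ^ (j+10+1) - v ^ (j+10+1)) - (u ^ (j+11+1) - v ^ (j+11+1)) = z - β := by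
        linear_combination k2 - k1
      rw [this, hu, hv]
      field_simp
    have hn : ‖u - v‖ ≤ (2/3)*(2/3) * ((((j + 10 : ℕ):ℝ)+1) * (2/3)^(j+10) * ‖u - v‖ + (((j + 11 : ℕ):ℝ)+1) * (2/3)^(j+11) * ‖u - v‖) := by
      rw [← norm_neg (u - v), neg_sub]
      nth_rw 1 [e]
      rw [norm_mul, norm_mul, norm_sub_rev v u]
      gcongr
      refine (norm_sub_le _ _).trans (add_le_add ?_ ?_)
      · exact bc_pow_sub u v _ hu1 hv1 _
      · exact bc_pow_sub u v _ hu1 hv1 _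
    have hs := bc_pow_small j
    have hp : (0:ℝ) < (2/3)^(j+10) := by positivity
    have e1 : ((2:ℝ)/3)^(j+12) = (2/3)^(j+10) * (4/9) := by rw [pow_add _ j 12, pow_add _ j 10]; ring
    have e2 : ((2:ℝ)/3)^(j+11) = (2/3)^(j+10) * (2/3) := by rw [pow_add _ j 11, pow_add _ j 10]; ring
    rw [e1] at hs
    rw [e2] at hn
    push_cast at hn
    have hz : ‖u - v‖ = 0 := by
      by_contra hne
      have hpos : 0 < ‖u - v‖ := lt_of_le_of_ne (norm_nonneg _) (Ne.symm hne)
      have h5 : (2/3:ℝ)*(2/3) * (((j:ℝ)+10+1) * (2/3)^(j+10) + ((j:ℝ) + 11+1) * ((2/3)^(j+10) * (2/3))) < 1 := by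
        have hj : (0:ℝ) ≤ j := by positivity
        nlinarith [mul_nonneg hj hp.le]
      nlinarith
    have : u = v := by rwa [norm_eq_zero, sub_eq_zero] at hz
    exact inv_injective this

end B1

section B2

lemma bc_geom_lt (β : ℝ) (hβ : 2 < β) (L : ℕ) : ∑ k ∈ Finset.range L, β ^ k < β ^ L := by
  induction L with
  | zero => simp
  | succ L ih =>
    rw [Finset.sum_range_succ, pow_succ]
    have : 0 < β ^ L := by positivity
    nlinarith

lemma bc_digit_ne (β : ℝ) (hβ : 2 < β) (e : ℕ → ℤ) (he : ∀ k, |e k| ≤ 1) (L : ℕ)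
    (h : ∃ k < L, e k ≠ 0) : ∑ k ∈ Finset.range L, (e k : ℝ) * β ^ k ≠ 0 := by
  induction L with
  | zero => obtain ⟨k, hk, _⟩ := h; omega
  | succ L ih =>
    rw [Finset.sum_range_succ]
    by_cases h0 : e L = 0
    · rw [h0]
      simp only [Int.cast_zero, zero_mul, add_zero]
      apply ih
      obtain ⟨k, hk, hk0⟩ := h
      refine ⟨k, ?_, hk0⟩
      rcases Nat.lt_succ_iff_lt_or_eq.mp hk with h | h
      · exact h
      · exact absurd (h ▸ h0) hk0
    · intro hs
      have h1 : |∑ k ∈ Finset.range L, (e k : ℝ) * β ^ k| ≤ ∑ k ∈ Finset.range L, β ^ k := by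
        refine (Finset.abs_sum_le_sum_abs _ _).trans (Finset.sum_le_sum fun k _ => ?_)
        rw [abs_mul, abs_of_pos (by positivity : 0 < β ^ k)]
        have : |(e k : ℝ)| ≤ 1 := by exact_mod_cast he k
        nlinarith [(by positivity : 0 < β ^ k)]
      have h2 : |∑ k ∈ Finset.range L, (e k : ℝ) * β ^ k| = |(e L : ℝ)| * β ^ L := by
        rw [eq_neg_of_add_eq_zero_left hs, abs_neg, abs_mul, abs_of_pos (by positivity : 0 < β ^ L)]
      have h3 : (1:ℝ) ≤ |(e L : ℝ)| := by exact_mod_cast Int.one_le_abs h0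
      have := bc_geom_lt β hβ L
      nlinarith [(by positivity : 0 < β ^ L)]

lemma bc_norm_ge {K : Type*} [Field K] [Algebra ℚ K] [FiniteDimensional ℚ K] (y : K) (hy : y ≠ 0)
    (hi : IsIntegral ℤ y) : 1 ≤ ∏ σ : K →ₐ[ℚ] ℂ, ‖σ y‖ := by
  rw [← norm_prod, ← Algebra.norm_eq_prod_embeddings ℚ ℂ y]
  have h1 : IsIntegral ℤ (Algebra.norm ℚ y) := Algebra.isIntegral_norm ℚ hi
  obtain ⟨c, hc⟩ := IsIntegrallyClosed.isIntegral_iff.mp h1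
  have h2 : Algebra.norm ℚ y ≠ 0 := Algebra.norm_ne_zero_iff.mpr hy
  rw [← hc] at h2 ⊢
  have hc0 : c ≠ 0 := by rintro rfl; simp at h2
  have := Int.one_le_abs hc0
  simp only [eq_intCast, map_intCast, Complex.norm_intCast]
  exact_mod_cast this

lemma bc_sep (m : ℕ) (hm : 12 ≤ m) (β : ℝ) (hβ : 2 < β) (hβ0 : β ^ m * (β - 2) = β - 1)
    (lam : ℝ) (hl0 : 0 < lam) (hl1 : lam < 1) (hl : lam ^ m * (lam - 2) = lam - 1) :
    ∃ c1 : ℝ, 0 < c1 ∧ ∀ (L : ℕ) (e : ℕ → ℤ), (∀ k, |e k| ≤ 1) → (∃ k < L, e k ≠ 0) →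
      c1 / β ^ L ≤ |∑ k ∈ Finset.range L, (e k : ℝ) * lam ^ k| := by
  classical
  have hint : IsIntegral ℤ lam := by
    refine ⟨Polynomial.X ^ (m+1) - (2 * Polynomial.X ^ m + Polynomial.X - 1), ?_, ?_⟩
    · apply Polynomial.monic_X_pow_sub
      refine lt_of_le_of_lt (b := (m:WithBot ℕ)) ?_ (by exact_mod_cast Nat.lt_succ_self m)
      have : (2 * Polynomial.X ^ m + Polynomial.X - 1 : Polynomial ℤ) = Polynomial.C 2 * Polynomial.X ^ m + Polynomial.X - 1 := by simp
      rw [this]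
      compute_degree
      exact max_le le_rfl (by exact_mod_cast (by omega : 1 ≤ m))
    · simp [Polynomial.eval₂_sub, Polynomial.eval₂_add, Polynomial.eval₂_mul, Polynomial.eval₂_pow]
      linear_combination hl
  let K := IntermediateField.adjoin ℚ {lam}
  have hintQ : IsIntegral ℚ lam := hint.tower_top
  have : FiniteDimensional ℚ K := IntermediateField.adjoin.finiteDimensional hintQ
  let g : K := IntermediateField.AdjoinSimple.gen ℚ lam
  have hgl : (g : ℝ) = lam := rfl
  have hgne : g ≠ 0 := by
    intro h
    have : (g:ℝ) = 0 := by rw [h]; rfl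
    rw [hgl] at this; linarith
  have hgi : IsIntegral ℤ g := by
    rw [← isIntegral_algebraMap_iff (A := K) (B := ℝ) (algebraMap K ℝ).injective]
    exact hint
  have hgeq : g ^ m * (g - 2) = g - 1 := by
    apply Subtype.ext
    push_cast
    rw [hgl]; exact hl
  have hroot : ∀ σ : K →ₐ[ℚ] ℂ, (σ g) ^ m * (σ g - 2) = σ g - 1 := by
    intro σ
    have := congrArg σ hgeq
    have h2 : σ 2 = 2 := map_ofNat σ 2
    rw [map_mul, map_pow, map_sub, map_sub, h2, map_one] at this
    exact this
  obtain ⟨τ, hτ⟩ : ∃ τ : K →ₐ[ℚ] ℂ, 1 ≤ ‖τ g‖ := by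
    by_contra hcon
    push Not at hcon
    have h1 := bc_norm_ge g hgne hgi
    let σ0 : K →ₐ[ℚ] ℂ := (Complex.ofRealAm.restrictScalars ℚ).comp K.val
    have h2 : ∏ σ : K →ₐ[ℚ] ℂ, ‖σ g‖ < ∏ σ : K →ₐ[ℚ] ℂ, (1:ℝ) := by
      apply Finset.prod_lt_prod_of_nonempty
      · intro i _
        rw [norm_pos_iff]
        exact (map_ne_zero i).mpr hgne
      · intro i _; exact hcon i
      · exact ⟨σ0, Finset.mem_univ _⟩
    simp at h2
    linarith
  have hτβ : τ g = β := bc_roots m hm β hβ hβ0 _ (hroot τ) hτ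
  let σ0 : K →ₐ[ℚ] ℂ := (Complex.ofRealAm.restrictScalars ℚ).comp K.val
  have hσ0 : ∀ y : K, σ0 y = ((y:ℝ) : ℂ) := fun y => rfl
  have hne : σ0 ≠ τ := by
    intro h
    have h1 : σ0 g = (β:ℂ) := by rw [h, hτβ]
    rw [hσ0, hgl] at h1
    have : lam = β := by exact_mod_cast h1
    linarith
  have hsmall : ∀ σ : K →ₐ[ℚ] ℂ, σ ≠ τ → ‖σ g‖ < 1 := by
    intro σ hσ
    by_contra hcon
    push Not at hcon
    have h1 := bc_roots m hm β hβ hβ0 _ (hroot σ) hcon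
    apply hσ
    apply IntermediateField.algHom_ext_of_eq_adjoin ℚ (S := K) (s := {lam}) rfl
    intro x hx
    have : x = lam := hx
    subst this
    exact h1.trans hτβ.symm
  let S : Finset (K →ₐ[ℚ] ℂ) := (Finset.univ.erase τ).erase σ0
  let M : ℝ := ∏ σ ∈ S, (1 - ‖σ g‖)⁻¹
  have hM : 0 < M := by
    apply Finset.prod_pos
    intro σ hσ
    have h1 : σ ≠ τ := by simp [S] at hσ; tauto
    have := hsmall σ h1
    apply inv_pos.mpr; linarith
  refine ⟨M⁻¹, inv_pos.mpr hM, ?_⟩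
  intro L e he hex
  let y : K := ∑ k ∈ Finset.range L, (e k : K) * g ^ k
  have hσy : ∀ σ : K →ₐ[ℚ] ℂ, σ y = ∑ k ∈ Finset.range L, (e k : ℂ) * (σ g) ^ k := by
    intro σ; simp [y]
  have hnorm : ∀ σ : K →ₐ[ℚ] ℂ, ‖σ y‖ ≤ ∑ k ∈ Finset.range L, ‖σ g‖ ^ k := by
    intro σ
    rw [hσy]
    refine (norm_sum_le _ _).trans (Finset.sum_le_sum fun k _ => ?_)
    rw [norm_mul, norm_pow]
    have : ‖(e k : ℂ)‖ ≤ 1 := by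
      rw [Complex.norm_intCast]; exact_mod_cast he k
    have h0 : 0 ≤ ‖σ g‖ ^ k := by positivity
    nlinarith
  have hτy : τ y = ((∑ k ∈ Finset.range L, (e k : ℝ) * β ^ k : ℝ) : ℂ) := by
    rw [hσy, hτβ]; push_cast; rfl
  have hy : y ≠ 0 := by
    intro h
    rw [h, map_zero] at hτy
    exact bc_digit_ne β hβ e he L hex (by exact_mod_cast hτy.symm)
  have hyi : IsIntegral ℤ y := by
    apply IsIntegral.sum
    intro k _
    exact (isIntegral_algebraMap (R := ℤ) (x := e k)).mul (hgi.pow k)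
  have hp := bc_norm_ge y hy hyi
  rw [← Finset.mul_prod_erase _ _ (Finset.mem_univ τ),
    ← Finset.mul_prod_erase _ _ (Finset.mem_erase.mpr ⟨hne, Finset.mem_univ σ0⟩)] at hp
  have h1 : ‖τ y‖ ≤ β ^ L := by
    refine (hnorm τ).trans ?_
    have := bc_geom_lt β hβ L
    rw [hτβ, Complex.norm_real, Real.norm_eq_abs, abs_of_pos (by linarith)]
    exact this.le
  have h2 : ∏ σ ∈ S, ‖σ y‖ ≤ M := by
    apply Finset.prod_le_prod
    · intro σ _; exact norm_nonneg _
    · intro σ hσ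
      have h1 : σ ≠ τ := by simp [S] at hσ; tauto
      have h3 := hsmall σ h1
      refine (hnorm σ).trans ?_
      rw [← tsum_geometric_of_lt_one (norm_nonneg _) h3]
      exact (summable_geometric_of_lt_one (norm_nonneg _) h3).sum_le_tsum _ (fun k _ => by positivity)
  have h3 : ‖σ0 y‖ = |∑ k ∈ Finset.range L, (e k : ℝ) * lam ^ k| := by
    have : σ0 y = ((∑ k ∈ Finset.range L, (e k : ℝ) * lam ^ k : ℝ) : ℂ) := by
      rw [hσy, hσ0, hgl]; push_cast; rfl
    rw [this, Complex.norm_real, Real.norm_eq_abs]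
  rw [← h3]
  have hβL : 0 < β ^ L := by positivity
  have h4 : 1 ≤ β ^ L * (‖σ0 y‖ * M) := by
    refine hp.trans ?_
    gcongr
  rw [div_le_iff₀ hβL, inv_le_iff_one_le_mul₀ hM]
  linarith

end B2

section B3

noncomputable def bcG (s : ℝ) : Measure ℝ := ProbabilityTheory.gaussianReal 0 s.toNNReal

instance bcG_prob (s : ℝ) : IsProbabilityMeasure (bcG s) := by unfold bcG; infer_instance

noncomputable def bcEta (s x : ℝ) : ℝ := (√(2 * π * s))⁻¹ * exp (-x ^ 2 / (2 * s))

noncomputable def bcF (ρ : Measure ℝ) (s z : ℝ) : ℝ := ∫ x, bcEta s (z - x) ∂ρ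

noncomputable def bcE (ρ : Measure ℝ) (s : ℝ) : ℝ := ∫ z, log (bcF ρ s z) ∂(ρ.conv (bcG s))

lemma bcG_conv {s t : ℝ} (hs : 0 ≤ s) (ht : 0 ≤ t) : (bcG s).conv (bcG t) = bcG (s + t) := by
  unfold bcG
  rw [ProbabilityTheory.gaussianReal_conv_gaussianReal, Real.toNNReal_add hs ht, add_zero]

lemma bcEta_eq {s : ℝ} (hs : 0 < s) (x : ℝ) :
    bcEta s x = ProbabilityTheory.gaussianPDFReal 0 s.toNNReal x := by
  unfold bcEta ProbabilityTheory.gaussianPDFReal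
  rw [Real.coe_toNNReal _ hs.le, sub_zero]

lemma bcEta_pos {s : ℝ} (hs : 0 < s) (x : ℝ) : 0 < bcEta s x := by
  unfold bcEta; positivity

lemma bcEta_le {s : ℝ} (hs : 0 < s) (x : ℝ) : bcEta s x ≤ bcEta s 0 := by
  unfold bcEta
  have : -x ^ 2 / (2 * s) ≤ -0 ^ 2 / (2 * s) := by
    apply div_le_div_of_nonneg_right _ (by positivity)
    nlinarith [sq_nonneg x]
  gcongr

lemma bcEta_cont (s : ℝ) : Continuous (bcEta s) := by
  unfold bcEta; fun_prop

lemma bcEta_zero_mul (s x : ℝ) : bcEta s x = bcEta s 0 * exp (-x ^ 2 / (2 * s)) := by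
  simp [bcEta]

lemma bcG_eq {s : ℝ} (hs : 0 < s) :
    bcG s = volume.withDensity (fun x => ENNReal.ofReal (bcEta s x)) := by
  unfold bcG
  rw [ProbabilityTheory.gaussianReal_of_var_ne_zero _ (by simpa using hs), ProbabilityTheory.gaussianPDF_def]
  simp_rw [bcEta_eq hs]

lemma bcG_integral {s : ℝ} (hs : 0 < s) (φ : ℝ → ℝ) :
    ∫ x, φ x ∂(bcG s) = ∫ x, bcEta s x * φ x := by
  unfold bcG
  rw [ProbabilityTheory.integral_gaussianReal_eq_integral_smul (by simpa using hs)]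
  simp_rw [bcEta_eq hs, smul_eq_mul]

lemma bcG_sq_integrable (s B : ℝ) : Integrable (fun u => (|u| + B) ^ 2) (bcG s) := by
  have h : MemLp (fun u : ℝ => |u| + B) 2 (bcG s) := by
    have h1 : MemLp (id : ℝ → ℝ) 2 (bcG s) := by
      exact_mod_cast ProbabilityTheory.memLp_id_gaussianReal (μ := 0) (v := s.toNNReal) 2
    exact h1.abs.add (memLp_const B)
  exact h.integrable_sq

lemma bcG_abs_integrable (s B : ℝ) : Integrable (fun u => (|u| + B)) (bcG s) := by
  have h1 : MemLp (id : ℝ → ℝ) 1 (bcG s) := by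
    exact_mod_cast ProbabilityTheory.memLp_id_gaussianReal (μ := 0) (v := s.toNNReal) 1
  exact (memLp_one_iff_integrable.mp (h1.abs)).add (integrable_const B)

section
variable (ρ : Measure ℝ) [IsProbabilityMeasure ρ]

lemma bcEta_integrable {s : ℝ} (hs : 0 < s) (z : ℝ) : Integrable (fun x => bcEta s (z - x)) ρ := by
  refine Integrable.mono' (integrable_const (bcEta s 0)) ?_ ?_
  · exact ((bcEta_cont s).comp (by fun_prop)).aestronglyMeasurable
  · filter_upwards with x
    rw [Real.norm_eq_abs, abs_of_pos (bcEta_pos hs _)]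
    exact bcEta_le hs _

lemma bcF_cont {s : ℝ} (hs : 0 < s) : Continuous (bcF ρ s) := by
  unfold bcF
  refine continuous_of_dominated (bound := fun _ => bcEta s 0) ?_ ?_ (integrable_const _) ?_
  · intro z
    exact ((bcEta_cont s).comp (by fun_prop)).aestronglyMeasurable
  · intro z
    filter_upwards with x
    rw [Real.norm_eq_abs, abs_of_pos (bcEta_pos hs _)]
    exact bcEta_le hs _
  · filter_upwards with x
    exact (bcEta_cont s).comp (by fun_prop)

lemma bcF_le {s : ℝ} (hs : 0 < s) (z : ℝ) : bcF ρ s z ≤ bcEta s 0 := by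
  unfold bcF
  calc ∫ x, bcEta s (z - x) ∂ρ ≤ ∫ x, bcEta s 0 ∂ρ :=
        integral_mono (bcEta_integrable ρ hs z) (integrable_const _) (fun x => bcEta_le hs _)
    _ = _ := by simp

lemma bcF_ge {s B : ℝ} (hs : 0 < s) (hB : ∀ᵐ x ∂ρ, |x| ≤ B) (z : ℝ) :
    bcEta s 0 * exp (-(|z| + B) ^ 2 / (2 * s)) ≤ bcF ρ s z := by
  unfold bcF
  calc bcEta s 0 * exp (-(|z| + B) ^ 2 / (2 * s)) = ∫ x, bcEta s 0 * exp (-(|z| + B) ^ 2 / (2 * s)) ∂ρ := by simp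
    _ ≤ _ := by
      refine integral_mono_ae (integrable_const _) (bcEta_integrable ρ hs z) ?_
      filter_upwards [hB] with x hx
      rw [bcEta_zero_mul s (z - x)]
      have := (bcEta_pos hs 0).le
      have h2 : (z - x) ^ 2 ≤ (|z| + B) ^ 2 := by
        rw [sq_le_sq]
        refine (abs_sub z x).trans ((add_le_add le_rfl hx).trans (le_abs_self _))
      gcongr

lemma bcF_pos {s B : ℝ} (hs : 0 < s) (hB : ∀ᵐ x ∂ρ, |x| ≤ B) (z : ℝ) : 0 < bcF ρ s z :=
  lt_of_lt_of_le (by have := bcEta_pos hs 0; positivity) (bcF_ge ρ hs hB z)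

lemma bcF_nonneg {s : ℝ} (hs : 0 < s) (z : ℝ) : 0 ≤ bcF ρ s z :=
  integral_nonneg fun _ => (bcEta_pos hs _).le

lemma bcF_log_ge {s B : ℝ} (hs : 0 < s) (hB : ∀ᵐ x ∂ρ, |x| ≤ B) (z : ℝ) :
    log (bcEta s 0) - (|z| + B) ^ 2 / (2 * s) ≤ log (bcF ρ s z) := by
  have h0 := bcEta_pos hs 0
  have h := log_le_log (by positivity) (bcF_ge ρ hs hB z)
  rw [log_mul h0.ne' (exp_pos _).ne', log_exp] at h
  rw [neg_div] at h
  linarith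

lemma bcF_log_le {s B : ℝ} (hs : 0 < s) (hB : ∀ᵐ x ∂ρ, |x| ≤ B) (z : ℝ) :
    log (bcF ρ s z) ≤ log (bcEta s 0) := log_le_log (bcF_pos ρ hs hB z) (bcF_le ρ hs z)

lemma bcF_log_cont {s B : ℝ} (hs : 0 < s) (hB : ∀ᵐ x ∂ρ, |x| ≤ B) :
    Continuous (fun z => log (bcF ρ s z)) :=
  (bcF_cont ρ hs).log (fun z => (bcF_pos ρ hs hB z).ne')

lemma bcM_eq {s : ℝ} (hs : 0 < s) :
    ρ.conv (bcG s) = volume.withDensity (fun z => ENNReal.ofReal (bcF ρ s z)) := by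
  refine Measure.ext_of_lintegral _ fun g hg => ?_
  have hmeas : Measurable (fun p : ℝ × ℝ => ENNReal.ofReal (bcEta s (p.2 - p.1))) :=
    (((bcEta_cont s).comp (by fun_prop : Continuous fun p : ℝ × ℝ => p.2 - p.1)).measurable).ennreal_ofReal
  have hFm : Measurable (fun z => ENNReal.ofReal (bcF ρ s z)) := (bcF_cont ρ hs).measurable.ennreal_ofReal
  have h1 : ∀ x : ℝ, ∫⁻ y, g (x + y) ∂(bcG s) = ∫⁻ z, ENNReal.ofReal (bcEta s (z - x)) * g z := by
    intro x
    have hg1 : Measurable (fun y : ℝ => g (x + y)) := hg.comp (by fun_prop : Measurable fun y : ℝ => x + y)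
    rw [bcG_eq hs, lintegral_withDensity_eq_lintegral_mul _ ((bcEta_cont s).measurable.ennreal_ofReal) hg1]
    rw [← lintegral_add_left_eq_self (fun z => ENNReal.ofReal (bcEta s (z - x)) * g z) x]
    simp only [add_sub_cancel_left, Pi.mul_apply]
  have h2 : ∀ z : ℝ, ∫⁻ x, ENNReal.ofReal (bcEta s (z - x)) * g z ∂ρ = ENNReal.ofReal (bcF ρ s z) * g z := by
    intro z
    have hg2 : Measurable (fun x : ℝ => ENNReal.ofReal (bcEta s (z - x))) := by
      apply Measurable.ennreal_ofReal
      exact ((bcEta_cont s).comp (by fun_prop : Continuous fun x : ℝ => z - x)).measurable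
    have h4 : ENNReal.ofReal (bcF ρ s z) = ∫⁻ x, ENNReal.ofReal (bcEta s (z - x)) ∂ρ :=
      ofReal_integral_eq_lintegral_ofReal (bcEta_integrable ρ hs z) (by filter_upwards with x; exact (bcEta_pos hs _).le)
    rw [h4]
    exact lintegral_mul_const (μ := ρ) (g z) hg2
  have hm2 : Measurable (fun p : ℝ × ℝ => ENNReal.ofReal (bcEta s (p.2 - p.1)) * g p.2) :=
    hmeas.mul (hg.comp measurable_snd)
  rw [Measure.lintegral_conv hg, lintegral_withDensity_eq_lintegral_mul _ hFm hg, lintegral_congr h1]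
  have h3 := lintegral_lintegral_swap (μ := ρ) (ν := volume)
    (f := fun x z => ENNReal.ofReal (bcEta s (z - x)) * g z) hm2.aemeasurable
  rw [h3]
  exact lintegral_congr h2

lemma bcM_integral {s : ℝ} (hs : 0 < s) (φ : ℝ → ℝ) :
    ∫ z, φ z ∂(ρ.conv (bcG s)) = ∫ z, bcF ρ s z * φ z := by
  rw [bcM_eq ρ hs, integral_withDensity_eq_integral_toReal_smul
    ((bcF_cont ρ hs).measurable.ennreal_ofReal) (by filter_upwards with x; exact ENNReal.ofReal_lt_top)]
  refine integral_congr_ae ?_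
  filter_upwards with z
  rw [ENNReal.toReal_ofReal (bcF_nonneg ρ hs z), smul_eq_mul]

lemma bcM_integrable {s : ℝ} (hs : 0 < s) (φ : ℝ → ℝ) :
    Integrable φ (ρ.conv (bcG s)) ↔ Integrable (fun z => bcF ρ s z * φ z) := by
  rw [bcM_eq ρ hs, integrable_withDensity_iff_integrable_smul'
    ((bcF_cont ρ hs).measurable.ennreal_ofReal) (by filter_upwards with x; exact ENNReal.ofReal_lt_top)]
  refine integrable_congr ?_
  filter_upwards with z
  rw [ENNReal.toReal_ofReal (bcF_nonneg ρ hs z), smul_eq_mul]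

lemma bcF_integrable {s : ℝ} (hs : 0 < s) : Integrable (bcF ρ s) := by
  have := (bcM_integrable ρ hs (fun _ => 1)).mp (integrable_const _)
  simpa using this

lemma bcF_integral {s : ℝ} (hs : 0 < s) : ∫ z, bcF ρ s z = 1 := by
  have := bcM_integral ρ hs (fun _ => 1)
  simpa using this.symm

lemma bcM_sq_bound (s B : ℝ) (hB : ∀ᵐ x ∂ρ, |x| ≤ B) :
    Integrable (fun z => (|z| + B) ^ 2) (ρ.conv (bcG s)) ∧
      ∫ z, (|z| + B) ^ 2 ∂(ρ.conv (bcG s)) ≤ ∫ u, (|u| + 2 * B) ^ 2 ∂(bcG s) := by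
  have hcont : Continuous (fun z : ℝ => (|z| + B) ^ 2) := by fun_prop
  have hbound : ∀ x : ℝ, |x| ≤ B → ∀ u : ℝ, (|x + u| + B) ^ 2 ≤ (|u| + 2 * B) ^ 2 := by
    intro x hx u
    have h1 := abs_add_le x u
    have h2 := abs_nonneg x
    have h3 := abs_nonneg (x + u)
    exact pow_le_pow_left₀ (by linarith) (by linarith) 2
  have hint : ∀ x : ℝ, Integrable (fun u => (|x + u| + B) ^ 2) (bcG s) := by
    intro x
    refine Integrable.mono' (bcG_sq_integrable s (|x| + |B|)) (by fun_prop) ?_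
    filter_upwards with u
    rw [Real.norm_eq_abs, abs_of_nonneg (sq_nonneg _)]
    rw [sq_le_sq]
    refine (abs_add_le _ _).trans ?_
    rw [abs_abs]
    refine le_trans ?_ (le_abs_self _)
    linarith [abs_add_le x u]
  have hI : Integrable (fun z => (|z| + B) ^ 2) (ρ.conv (bcG s)) := by
    rw [integrable_conv_iff hcont.aestronglyMeasurable]
    refine ⟨by filter_upwards with x using hint x, ?_⟩
    refine Integrable.mono' (integrable_const (∫ u, (|u| + 2 * B) ^ 2 ∂(bcG s))) ?_ ?_
    · have : StronglyMeasurable (fun p : ℝ × ℝ => ‖(|p.1 + p.2| + B) ^ 2‖) := by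
        apply Continuous.stronglyMeasurable; fun_prop
      exact this.integral_prod_right.aestronglyMeasurable
    · filter_upwards [hB] with x hx
      rw [Real.norm_eq_abs, abs_of_nonneg (integral_nonneg fun u => norm_nonneg _)]
      refine integral_mono (hint x).norm (bcG_sq_integrable s _) fun u => ?_
      simp only [Real.norm_eq_abs]
      rw [abs_of_nonneg (sq_nonneg _)]
      exact hbound x hx u
  refine ⟨hI, ?_⟩
  rw [integral_conv hI]
  calc _ ≤ ∫ x, (∫ u, (|u| + 2 * B) ^ 2 ∂(bcG s)) ∂ρ := by
        refine integral_mono_of_nonneg ?_ (integrable_const _) ?_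
        · filter_upwards with x; exact integral_nonneg fun u => sq_nonneg _
        · filter_upwards [hB] with x hx
          exact integral_mono (hint x) (bcG_sq_integrable s _) fun u => hbound x hx u
    _ = _ := by simp

lemma bcF_log_integrable {s t B : ℝ} (ht : 0 < t) (hB : ∀ᵐ x ∂ρ, |x| ≤ B) :
    Integrable (fun z => log (bcF ρ t z)) (ρ.conv (bcG s)) := by
  refine Integrable.mono' (g := fun z => |log (bcEta t 0)| + (|z| + B) ^ 2 / (2 * t)) ?_
    (bcF_log_cont ρ ht hB).aestronglyMeasurable ?_
  · exact (integrable_const _).add ((bcM_sq_bound ρ s B hB).1.div_const _)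
  · filter_upwards with z
    have h1 := bcF_log_ge ρ ht hB z
    have h2 := bcF_log_le ρ ht hB z
    have h3 : 0 ≤ (|z| + B) ^ 2 / (2 * t) := by positivity
    rw [Real.norm_eq_abs, abs_le]
    constructor
    · have := neg_abs_le (log (bcEta t 0)); linarith
    · have := le_abs_self (log (bcEta t 0)); linarith

lemma bcE_one_ge {B : ℝ} (hB : ∀ᵐ x ∂ρ, |x| ≤ B) :
    log (bcEta 1 0) - (∫ u, (|u| + 2 * B) ^ 2 ∂(bcG 1)) / 2 ≤ bcE ρ 1 := by
  obtain ⟨h1, h2⟩ := bcM_sq_bound ρ 1 B hB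
  unfold bcE
  calc _ ≤ log (bcEta 1 0) - (∫ z, (|z| + B) ^ 2 ∂(ρ.conv (bcG 1))) / 2 := by linarith
    _ = ∫ z, (log (bcEta 1 0) - (|z| + B) ^ 2 / 2) ∂(ρ.conv (bcG 1)) := by
      rw [integral_sub (integrable_const _) (h1.div_const _), integral_div]
      simp
    _ ≤ _ := by
      refine integral_mono ((integrable_const _).sub (h1.div_const _)) (bcF_log_integrable ρ one_pos hB) fun z => ?_
      have := bcF_log_ge ρ one_pos hB z
      simpa using this

end

end B3

section B4

noncomputable def bcR (s c x : ℝ) : ℝ := bcEta s x / bcEta c x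

lemma bcR_cont (s : ℝ) {c : ℝ} (hc : 0 < c) : Continuous (bcR s c) := by
  unfold bcR
  exact (bcEta_cont s).div (bcEta_cont c) fun x => (bcEta_pos hc x).ne'

lemma bcR_nonneg {s c : ℝ} (hs : 0 < s) (hc : 0 < c) (x : ℝ) : 0 ≤ bcR s c x :=
  (div_pos (bcEta_pos hs x) (bcEta_pos hc x)).le

lemma bcR_le {s c : ℝ} (hs : 0 < s) (hc : s ≤ c) (x : ℝ) : bcR s c x ≤ bcEta s 0 / bcEta c 0 := by
  have hc0 : 0 < c := lt_of_lt_of_le hs hc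
  unfold bcR
  rw [bcEta_zero_mul s x, bcEta_zero_mul c x, mul_div_mul_comm]
  have h1 : exp (-x ^ 2 / (2 * s)) / exp (-x ^ 2 / (2 * c)) ≤ 1 := by
    rw [div_le_one (exp_pos _), exp_le_exp, neg_div, neg_div, neg_le_neg_iff]
    gcongr
  have h2 : 0 < bcEta s 0 / bcEta c 0 := div_pos (bcEta_pos hs 0) (bcEta_pos hc0 0)
  nlinarith

lemma bcR_integral {s c : ℝ} (hs : 0 < s) (hc : 0 < c) (φ : ℝ → ℝ) :
    ∫ x, bcR s c x * φ x ∂(bcG c) = ∫ x, φ x ∂(bcG s) := by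
  rw [bcG_integral hs, bcG_integral hc]
  refine integral_congr_ae ?_
  filter_upwards with x
  have := (bcEta_pos hc x).ne'
  unfold bcR
  field_simp

lemma bc_integrable_of_bdd {α : Type*} [TopologicalSpace α] [MeasurableSpace α] [OpensMeasurableSpace α]
    [SecondCountableTopology α] (μ : Measure α)
    [IsFiniteMeasure μ] (φ : α → ℝ) (hφ : Continuous φ) (C : ℝ) (h : ∀ x, |φ x| ≤ C) : Integrable φ μ :=
  Integrable.mono' (integrable_const C) hφ.aestronglyMeasurable (by filter_upwards with x; exact h x)

lemma bcR_abs_le {s c : ℝ} (hs : 0 < s) (hc : s ≤ c) (x : ℝ) : |bcR s c x| ≤ bcEta s 0 / bcEta c 0 := by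
  rw [abs_of_nonneg (bcR_nonneg hs (lt_of_lt_of_le hs hc) x)]; exact bcR_le hs hc x

lemma bcR_sq_integral {s t : ℝ} (hs : 0 < s) (ht : 0 < t) :
    ∫ x, bcR s (s+t) x ^ 2 ∂(bcG (s+t)) = (√(1 - (t/(s+t))^2))⁻¹ := by
  have hc : 0 < s + t := by positivity
  rw [bcG_integral hc]
  have e : ∀ x, bcEta (s+t) x * bcR s (s+t) x ^ 2 =
      (√(2 * π * s))⁻¹ ^ 2 * √(2 * π * (s+t)) * exp (-((s + 2 * t) / (2 * s * (s+t))) * x ^ 2) := by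
    intro x
    unfold bcR
    have h1 := (bcEta_pos hc x).ne'
    have : bcEta (s+t) x * (bcEta s x / bcEta (s+t) x) ^ 2 = bcEta s x ^ 2 * (bcEta (s+t) x)⁻¹ := by
      field_simp
    rw [this]
    unfold bcEta
    rw [mul_inv, inv_inv, mul_pow, ← exp_nat_mul, ← exp_neg]
    have : exp (-((s + 2 * t) / (2 * s * (s+t))) * x ^ 2) = exp ((2:ℕ) * (-x ^ 2 / (2 * s))) * exp (-(-x ^ 2 / (2 * (s+t)))) := by
      rw [← exp_add]
      congr 1
      push_cast
      field_simp
      ring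
    rw [this]; ring
  simp_rw [e]
  rw [integral_const_mul, integral_gaussian]
  have hsq : (√(2 * π * s))⁻¹ ^ 2 = (2 * π * s)⁻¹ := by rw [inv_pow, sq_sqrt (by positivity)]
  rw [hsq, mul_assoc, ← sqrt_mul (by positivity), ← sqrt_inv]
  rw [show (2 * π * s)⁻¹ = √(((2 * π * s)⁻¹)^2) by rw [sqrt_sq (by positivity)], ← sqrt_mul (by positivity)]
  congr 1
  have h2 : 1 - (t/(s+t))^2 = s * (s + 2 * t) / (s+t)^2 := by field_simp; ring
  rw [h2]
  have hpi := pi_pos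
  field_simp
  try ring

lemma bc_chi_num {x : ℝ} (hx0 : 0 ≤ x) (hx : x ≤ 1/16) : (√(1 - x))⁻¹ - 1 ≤ 9/16 * x := by
  have h1 : 1 / (1 + 9/16 * x) ≤ √(1 - x) := by
    apply Real.le_sqrt_of_sq_le
    rw [div_pow, div_le_iff₀ (by positivity)]
    nlinarith [mul_nonneg hx0 hx0, mul_nonneg (mul_nonneg hx0 hx0) (sub_nonneg.mpr hx), mul_nonneg hx0 (sub_nonneg.mpr hx)]
  have h2 : (√(1 - x))⁻¹ ≤ (1 / (1 + 9/16 * x))⁻¹ := inv_anti₀ (by positivity) h1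
  rw [one_div, inv_inv] at h2
  linarith

lemma bc_chi {s t : ℝ} (hs : 0 < s) (ht : 0 < t) (hq : t / (s+t) ≤ 1/4) :
    ∫ x, (bcR s (s+t) x - 1) ^ 2 ∂(bcG (s+t)) ≤ 9/16 * (t/(s+t))^2 := by
  have hc : 0 < s + t := by positivity
  have hle : s ≤ s + t := by linarith
  have h1 : Integrable (fun x => bcR s (s+t) x) (bcG (s+t)) :=
    bc_integrable_of_bdd _ _ (bcR_cont s hc) _ (bcR_abs_le hs hle)
  have h2 : Integrable (fun x => bcR s (s+t) x ^ 2) (bcG (s+t)) := by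
    refine bc_integrable_of_bdd _ _ ((bcR_cont s hc).pow 2) ((bcEta s 0 / bcEta (s+t) 0)^2) fun x => ?_
    rw [abs_pow]
    exact pow_le_pow_left₀ (abs_nonneg _) (bcR_abs_le hs hle x) 2
  have h3 : ∫ x, bcR s (s+t) x ∂(bcG (s+t)) = 1 := by
    have := bcR_integral hs hc (fun _ => 1)
    simpa using this
  have e : ∀ x, (bcR s (s+t) x - 1) ^ 2 = bcR s (s+t) x ^ 2 - 2 * bcR s (s+t) x + 1 := fun x => by ring
  simp_rw [e]
  have h21 : Integrable (fun x => bcR s (s+t) x ^ 2 - 2 * bcR s (s+t) x) (bcG (s+t)) := h2.sub (h1.const_mul 2)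
  rw [integral_add h21 (integrable_const _), integral_sub h2 (h1.const_mul 2), integral_const_mul, h3,
    bcR_sq_integral hs ht]
  have h0 : 0 < t/(s+t) := by positivity
  have := bc_chi_num (x := (t/(s+t))^2) (by positivity) (by nlinarith)
  simp
  linarith

lemma bc_shift (c : ℝ) (h : ℝ × ℝ → ℝ) (hi : Integrable h (volume.prod (bcG c))) :
    Integrable (fun p => h (p.1 + p.2, p.2)) (volume.prod (bcG c)) ∧
    ∫ p, h (p.1 + p.2, p.2) ∂(volume.prod (bcG c)) = ∫ p, h p ∂(volume.prod (bcG c)) := by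
  have mp := measurePreserving_add_prod (volume : Measure ℝ) (bcG c)
  constructor
  · exact mp.integrable_comp_of_integrable hi
  · conv_rhs => rw [← mp.map_eq]
    rw [integral_map mp.measurable.aemeasurable (by rw [mp.map_eq]; exact hi.aestronglyMeasurable)]

section
variable (ρ : Measure ℝ) [IsProbabilityMeasure ρ]

lemma bc_prod_eq {s : ℝ} (hs : 0 < s) (c : ℝ) : (ρ.conv (bcG s)).prod (bcG c) =
    (volume.prod (bcG c)).withDensity (fun p => ENNReal.ofReal (bcF ρ s p.1)) := by
  rw [bcM_eq ρ hs, prod_withDensity_left ((bcF_cont ρ hs).measurable.ennreal_ofReal)]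

lemma bc_prod_integral {s : ℝ} (hs : 0 < s) (c : ℝ) (ψ : ℝ × ℝ → ℝ) :
    ∫ p, ψ p ∂((ρ.conv (bcG s)).prod (bcG c)) = ∫ p, bcF ρ s p.1 * ψ p ∂(volume.prod (bcG c)) := by
  have hm : Measurable (fun p : ℝ × ℝ => ENNReal.ofReal (bcF ρ s p.1)) :=
    ((bcF_cont ρ hs).measurable.ennreal_ofReal).comp measurable_fst
  rw [bc_prod_eq ρ hs, integral_withDensity_eq_integral_toReal_smul hm
    (by filter_upwards with x; exact ENNReal.ofReal_lt_top)]
  refine integral_congr_ae ?_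
  filter_upwards with z
  rw [ENNReal.toReal_ofReal (bcF_nonneg ρ hs _), smul_eq_mul]

lemma bc_prod_integrable {s : ℝ} (hs : 0 < s) (c : ℝ) (ψ : ℝ × ℝ → ℝ)
    (h : Integrable ψ ((ρ.conv (bcG s)).prod (bcG c))) :
    Integrable (fun p => bcF ρ s p.1 * ψ p) (volume.prod (bcG c)) := by
  have hm : Measurable (fun p : ℝ × ℝ => ENNReal.ofReal (bcF ρ s p.1)) :=
    ((bcF_cont ρ hs).measurable.ennreal_ofReal).comp measurable_fst
  rw [bc_prod_eq ρ hs, integrable_withDensity_iff_integrable_smul' hm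
    (by filter_upwards with x; exact ENNReal.ofReal_lt_top)] at h
  refine h.congr ?_
  filter_upwards with z
  rw [ENNReal.toReal_ofReal (bcF_nonneg ρ hs _), smul_eq_mul]

end

lemma bc_phi_ge {a m : ℝ} (ha : 0 < a) (hm : 0 < m) : (a - m) ^ 2 ≤ 2 * (a + m) * (a * log a - a * log m - a + m) := by
  obtain ⟨u, hu, rfl⟩ : ∃ u, 0 < u ∧ a = u ^ 2 := ⟨√a, sqrt_pos.mpr ha, (sq_sqrt ha.le).symm⟩
  obtain ⟨v, hv, rfl⟩ : ∃ v, 0 < v ∧ m = v ^ 2 := ⟨√m, sqrt_pos.mpr hm, (sq_sqrt hm.le).symm⟩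
  have h1 : 1 - v / u ≤ log u - log v := by
    have := Real.one_sub_inv_le_log_of_pos (div_pos hu hv)
    rwa [inv_div, log_div hu.ne' hv.ne'] at this
  have h2 : (u - v) ^ 2 ≤ u^2 * log (u^2) - u^2 * log (v^2) - u^2 + v^2 := by
    rw [log_pow, log_pow]
    push_cast
    have : u^2 * (1 - v/u) ≤ u^2 * (log u - log v) := by gcongr
    have e : u^2 * (1 - v/u) = u^2 - u * v := by field_simp
    nlinarith
  have h3 : (u^2 - v^2)^2 ≤ 2 * (u^2 + v^2) * (u - v)^2 := by
    have : (u^2 - v^2)^2 = (u+v)^2 * (u-v)^2 := by ring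
    rw [this]
    gcongr
    nlinarith [sq_nonneg (u - v)]
  refine h3.trans ?_
  gcongr

lemma bc_phi_nonneg {a m : ℝ} (ha : 0 < a) (hm : 0 < m) : 0 ≤ a * log a - a * log m - a + m := by
  have h := bc_phi_ge ha hm
  have h2 : 0 < 2 * (a + m) := by positivity
  by_contra hcon
  push Not at hcon
  nlinarith [sq_nonneg (a - m)]

lemma bc_amgm {a m q α : ℝ} (ha : 0 < a) (hm : 0 < m) (hα : 0 < α) :
    |(a - m) * q| ≤ α * (q ^ 2 * a + q ^ 2 * m) + α⁻¹ / 2 * (a * log a - a * log m - a + m) := by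
  have h := bc_phi_ge ha hm
  have h0 := bc_phi_nonneg ha hm
  set Φ := a * log a - a * log m - a + m
  have e1 : 0 ≤ α * (q ^ 2 * a + q ^ 2 * m) := by positivity
  have e2 : 0 ≤ α⁻¹ / 2 * Φ := by positivity
  apply abs_le_of_sq_le_sq _ (by linarith)
  have e3 : ((a - m) * q) ^ 2 ≤ 4 * (α * (q ^ 2 * a + q ^ 2 * m)) * (α⁻¹ / 2 * Φ) := by
    have : 4 * (α * (q ^ 2 * a + q ^ 2 * m)) * (α⁻¹ / 2 * Φ) = q ^ 2 * (2 * (a + m) * Φ) := by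
      field_simp; ring
    rw [this, mul_pow, mul_comm]
    gcongr
  nlinarith [sq_nonneg (α * (q ^ 2 * a + q ^ 2 * m) - α⁻¹ / 2 * Φ)]

section
variable (ρ : Measure ℝ) [IsProbabilityMeasure ρ]

lemma bcM_conv {s c : ℝ} (hs : 0 < s) (hc : 0 < c) : (ρ.conv (bcG s)).conv (bcG c) = ρ.conv (bcG (s + c)) := by
  rw [Measure.conv_assoc, bcG_conv hs.le hc.le]

lemma bc_phi_int {s c B : ℝ} (hs : 0 < s) (hc : 0 < c) (hB : ∀ᵐ x ∂ρ, |x| ≤ B) :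
    Integrable (fun p : ℝ × ℝ => bcF ρ s p.1 * log (bcF ρ s p.1) - bcF ρ s p.1 * log (bcF ρ (s+c) (p.1 + p.2))
      - bcF ρ s p.1 + bcF ρ (s+c) (p.1 + p.2)) (volume.prod (bcG c)) ∧
    ∫ p : ℝ × ℝ, (bcF ρ s p.1 * log (bcF ρ s p.1) - bcF ρ s p.1 * log (bcF ρ (s+c) (p.1 + p.2))
      - bcF ρ s p.1 + bcF ρ (s+c) (p.1 + p.2)) ∂(volume.prod (bcG c)) = bcE ρ s - bcE ρ (s + c) := by
  have hsc : 0 < s + c := by positivity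
  have i1 : Integrable (fun p : ℝ × ℝ => bcF ρ s p.1 * log (bcF ρ s p.1)) (volume.prod (bcG c)) := by
    have := (bcM_integrable ρ hs _).mp (bcF_log_integrable ρ (s := s) hs hB)
    exact this.comp_fst (bcG c)
  have v1 : ∫ p : ℝ × ℝ, bcF ρ s p.1 * log (bcF ρ s p.1) ∂(volume.prod (bcG c)) = bcE ρ s := by
    rw [bcE, bcM_integral ρ hs]
    have := integral_fun_fst (μ := (volume : Measure ℝ)) (ν := bcG c) (fun x => bcF ρ s x * log (bcF ρ s x))
    simpa using this
  have j2 : Integrable (fun z => log (bcF ρ (s+c) z)) ((ρ.conv (bcG s)).conv (bcG c)) := by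
    rw [bcM_conv ρ hs hc]
    exact bcF_log_integrable ρ hsc hB
  have k2 : Integrable (fun p : ℝ × ℝ => log (bcF ρ (s+c) (p.1 + p.2))) ((ρ.conv (bcG s)).prod (bcG c)) := by
    unfold Measure.conv at j2
    exact (integrable_map_measure ((bcF_log_cont ρ hsc hB).aestronglyMeasurable) (by fun_prop)).mp j2
  have i2 := bc_prod_integrable ρ hs c _ k2
  have v2 : ∫ p : ℝ × ℝ, bcF ρ s p.1 * log (bcF ρ (s+c) (p.1 + p.2)) ∂(volume.prod (bcG c)) = bcE ρ (s + c) := by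
    rw [← bc_prod_integral ρ hs c, integral_prod _ k2, bcE, ← bcM_conv ρ hs hc, integral_conv j2]
  have i3 : Integrable (fun p : ℝ × ℝ => bcF ρ s p.1) (volume.prod (bcG c)) := (bcF_integrable ρ hs).comp_fst _
  have v3 : ∫ p : ℝ × ℝ, bcF ρ s p.1 ∂(volume.prod (bcG c)) = 1 := by
    have := integral_fun_fst (μ := (volume : Measure ℝ)) (ν := bcG c) (fun x => bcF ρ s x)
    rw [bcF_integral ρ hs] at this
    simpa using this
  have i4' : Integrable (fun p : ℝ × ℝ => bcF ρ (s+c) p.1) (volume.prod (bcG c)) := (bcF_integrable ρ hsc).comp_fst _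
  have v4' : ∫ p : ℝ × ℝ, bcF ρ (s+c) p.1 ∂(volume.prod (bcG c)) = 1 := by
    have := integral_fun_fst (μ := (volume : Measure ℝ)) (ν := bcG c) (fun x => bcF ρ (s+c) x)
    rw [bcF_integral ρ hsc] at this
    simpa using this
  obtain ⟨i4, v4⟩ := bc_shift c _ i4'
  have i12 : Integrable (fun p : ℝ × ℝ => bcF ρ s p.1 * log (bcF ρ s p.1) - bcF ρ s p.1 * log (bcF ρ (s+c) (p.1 + p.2))) (volume.prod (bcG c)) := i1.sub i2
  have i123 : Integrable (fun p : ℝ × ℝ => bcF ρ s p.1 * log (bcF ρ s p.1) - bcF ρ s p.1 * log (bcF ρ (s+c) (p.1 + p.2)) - bcF ρ s p.1) (volume.prod (bcG c)) := i12.sub i3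
  refine ⟨i123.add i4, ?_⟩
  rw [integral_add i123 i4, integral_sub i12 i3, integral_sub i1 i2, v1, v2, v3]
  simp only at v4
  rw [v4, v4']
  ring

lemma bcE_anti {s c B : ℝ} (hs : 0 < s) (hc : 0 < c) (hB : ∀ᵐ x ∂ρ, |x| ≤ B) : bcE ρ (s + c) ≤ bcE ρ s := by
  have hsc : 0 < s + c := by positivity
  have h := (bc_phi_int ρ hs hc hB).2
  have : 0 ≤ bcE ρ s - bcE ρ (s + c) := by
    rw [← h]
    exact integral_nonneg fun p => bc_phi_nonneg (bcF_pos ρ hs hB _) (bcF_pos ρ hsc hB _)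
  linarith

lemma bc_lemmaA {B s s' t κ δ C : ℝ} (hB : ∀ᵐ x ∂ρ, |x| ≤ B) (hs : 0 < s) (hs' : 0 < s') (ht : 0 < t)
    (hq : t / (s' + t) ≤ 1/4) (hκ : 0 < κ) (hχ : 9/16 * (t / (s' + t))^2 ≤ κ ^ 2) (hδ : 0 < δ)
    (hΔ : bcE ρ s - bcE ρ (s + (s' + t)) ≤ δ ^ 2) (φ : ℝ → ℝ) (hφ : Continuous φ) (hC : ∀ x, |φ x| ≤ C) :
    |∫ z, φ z ∂((ρ.conv (bcG s)).conv (bcG s')) - ∫ z, φ z ∂((ρ.conv (bcG s)).conv (bcG (s' + t)))| ≤ 2 * κ * δ * C := by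
  have hC0 : 0 ≤ C := (abs_nonneg _).trans (hC 0)
  set c := s' + t with hcdef
  have hc : 0 < c := by positivity
  have hle : s' ≤ c := by linarith
  have hsc : 0 < s + c := by positivity
  set K := bcEta s' 0 / bcEta c 0 with hK
  have hK0 : 0 ≤ K := (div_pos (bcEta_pos hs' 0) (bcEta_pos hc 0)).le
  have hrc := bcR_cont s' hc
  have hrK : ∀ x, |bcR s' c x| ≤ K := bcR_abs_le hs' hle
  have hqK : ∀ x, |bcR s' c x - 1| ≤ K + 1 := fun x => (abs_sub _ _).trans (by simpa using hrK x)
  have hφ1 : ∀ (μ : Measure ℝ) [IsProbabilityMeasure μ], Integrable φ μ := fun μ _ => bc_integrable_of_bdd _ _ hφ C hC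
  -- formulas for the two terms
  have f1 : ∫ z, φ z ∂((ρ.conv (bcG s)).conv (bcG s')) =
      ∫ p : ℝ × ℝ, bcR s' c p.2 * φ (p.1 + p.2) ∂((ρ.conv (bcG s)).prod (bcG c)) := by
    rw [integral_conv (hφ1 _), integral_prod]
    · refine integral_congr_ae ?_
      filter_upwards with w
      exact (bcR_integral hs' hc (fun x => φ (w + x))).symm
    · refine bc_integrable_of_bdd _ _ (by fun_prop) (K * C) fun p => ?_
      rw [abs_mul]
      exact mul_le_mul (hrK _) (hC _) (abs_nonneg _) hK0
  have f2 : ∫ z, φ z ∂((ρ.conv (bcG s)).conv (bcG c)) =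
      ∫ p : ℝ × ℝ, φ (p.1 + p.2) ∂((ρ.conv (bcG s)).prod (bcG c)) := by
    rw [integral_conv (hφ1 _), integral_prod]
    exact bc_integrable_of_bdd _ _ (by fun_prop) C fun p => hC _
  have f3 : ∫ z, φ z ∂((ρ.conv (bcG s)).conv (bcG s')) - ∫ z, φ z ∂((ρ.conv (bcG s)).conv (bcG c)) =
      ∫ p : ℝ × ℝ, bcF ρ s p.1 * ((bcR s' c p.2 - 1) * φ (p.1 + p.2)) ∂(volume.prod (bcG c)) := by
    rw [f1, f2, ← integral_sub, ← bc_prod_integral ρ hs c]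
    · congr 1
      ext p; ring
    · refine bc_integrable_of_bdd _ _ (by fun_prop) (K * C) fun p => ?_
      rw [abs_mul]
      exact mul_le_mul (hrK _) (hC _) (abs_nonneg _) hK0
    · exact bc_integrable_of_bdd _ _ (by fun_prop) C fun p => hC _
  have ia : Integrable (fun p : ℝ × ℝ => bcF ρ s p.1 * ((bcR s' c p.2 - 1) * φ (p.1 + p.2))) (volume.prod (bcG c)) := by
    apply bc_prod_integrable ρ hs c
    refine bc_integrable_of_bdd _ _ (by fun_prop) ((K+1) * C) fun p => ?_
    rw [abs_mul]
    exact mul_le_mul (hqK _) (hC _) (abs_nonneg _) (by positivity)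
  have iq : Integrable (fun x => bcR s' c x - 1) (bcG c) := bc_integrable_of_bdd _ _ (by fun_prop) (K+1) hqK
  have hq0 : ∫ x, (bcR s' c x - 1) ∂(bcG c) = 0 := by
    have h3 : ∫ x, bcR s' c x ∂(bcG c) = 1 := by
      have := bcR_integral hs' hc (fun _ => 1)
      simpa using this
    rw [integral_sub (bc_integrable_of_bdd _ _ hrc K hrK) (integrable_const _), h3]
    simp
  have iFφ : Integrable (fun z => bcF ρ (s+c) z * φ z) := (bcM_integrable ρ hsc φ).mp (hφ1 _)
  have im' : Integrable (fun p : ℝ × ℝ => bcF ρ (s+c) p.1 * φ p.1 * (bcR s' c p.2 - 1)) (volume.prod (bcG c)) :=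
    iFφ.mul_prod iq
  obtain ⟨im, vm⟩ := bc_shift c _ im'
  simp only at im vm
  rw [integral_prod_mul (fun z => bcF ρ (s+c) z * φ z) (fun x => bcR s' c x - 1), hq0, mul_zero] at vm
  have f4 : ∫ z, φ z ∂((ρ.conv (bcG s)).conv (bcG s')) - ∫ z, φ z ∂((ρ.conv (bcG s)).conv (bcG c)) =
      ∫ p : ℝ × ℝ, ((bcF ρ s p.1 - bcF ρ (s+c) (p.1 + p.2)) * (bcR s' c p.2 - 1)) * φ (p.1 + p.2) ∂(volume.prod (bcG c)) := by
    rw [f3, ← sub_zero (∫ p : ℝ × ℝ, bcF ρ s p.1 * ((bcR s' c p.2 - 1) * φ (p.1 + p.2)) ∂(volume.prod (bcG c))), ← vm,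
      ← integral_sub ia im]
    congr 1
    ext p; ring
  -- squares
  have iq2 : Integrable (fun x => (bcR s' c x - 1)^2) (bcG c) := by
    refine bc_integrable_of_bdd _ _ (by fun_prop) ((K+1)^2) fun x => ?_
    rw [abs_pow]
    exact pow_le_pow_left₀ (abs_nonneg _) (hqK x) 2
  have hχ2 : ∫ x, (bcR s' c x - 1)^2 ∂(bcG c) ≤ κ^2 := (bc_chi hs' ht hq).trans hχ
  have ja : Integrable (fun p : ℝ × ℝ => (bcR s' c p.2 - 1)^2 * bcF ρ s p.1) (volume.prod (bcG c)) := by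
    have := (bcF_integrable ρ hs).mul_prod iq2
    refine this.congr ?_
    filter_upwards with p; ring
  have wa : ∫ p : ℝ × ℝ, (bcR s' c p.2 - 1)^2 * bcF ρ s p.1 ∂(volume.prod (bcG c)) ≤ κ^2 := by
    have := integral_prod_mul (μ := (volume : Measure ℝ)) (ν := bcG c) (bcF ρ s) (fun x => (bcR s' c x - 1)^2)
    rw [bcF_integral ρ hs, one_mul] at this
    simp_rw [mul_comm ((bcR s' c _ - 1)^2)]
    rw [this]; exact hχ2
  have jm' : Integrable (fun p : ℝ × ℝ => (bcR s' c p.2 - 1)^2 * bcF ρ (s+c) p.1) (volume.prod (bcG c)) := by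
    have := (bcF_integrable ρ hsc).mul_prod iq2
    refine this.congr ?_
    filter_upwards with p; ring
  have wm' : ∫ p : ℝ × ℝ, (bcR s' c p.2 - 1)^2 * bcF ρ (s+c) p.1 ∂(volume.prod (bcG c)) ≤ κ^2 := by
    have := integral_prod_mul (μ := (volume : Measure ℝ)) (ν := bcG c) (bcF ρ (s+c)) (fun x => (bcR s' c x - 1)^2)
    rw [bcF_integral ρ hsc, one_mul] at this
    simp_rw [mul_comm ((bcR s' c _ - 1)^2)]
    rw [this]; exact hχ2
  obtain ⟨jm, wm⟩ := bc_shift c _ jm'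
  simp only at jm wm
  obtain ⟨iΦ, vΦ⟩ := bc_phi_int ρ hs hc hB
  set α := δ / (2 * κ) with hα
  have hα0 : 0 < α := by positivity
  have jam : Integrable (fun p : ℝ × ℝ => (bcR s' c p.2 - 1)^2 * bcF ρ s p.1 + (bcR s' c p.2 - 1)^2 * bcF ρ (s+c) (p.1 + p.2)) (volume.prod (bcG c)) := ja.add jm
  rw [f4, ← Real.norm_eq_abs]
  have hb := norm_integral_le_of_norm_le (((jam.const_mul α).add (iΦ.const_mul (α⁻¹/2))).mul_const C)
    (f := fun p : ℝ × ℝ => ((bcF ρ s p.1 - bcF ρ (s+c) (p.1 + p.2)) * (bcR s' c p.2 - 1)) * φ (p.1 + p.2)) (by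
      filter_upwards with p
      rw [Real.norm_eq_abs, abs_mul]
      refine mul_le_mul (bc_amgm (bcF_pos ρ hs hB _) (bcF_pos ρ hsc hB _) hα0) (hC _) (abs_nonneg _) ?_
      have h1 := bc_phi_nonneg (bcF_pos ρ hs hB p.1) (bcF_pos ρ hsc hB (p.1 + p.2))
      have h2 := bcF_pos ρ hs hB p.1
      have h3 := bcF_pos ρ hsc hB (p.1 + p.2)
      simp only [Pi.add_apply]
      positivity)
  refine hb.trans ?_
  rw [integral_mul_const]
  simp only [Pi.add_apply]
  rw [integral_add (jam.const_mul α) (iΦ.const_mul (α⁻¹/2)), integral_const_mul, integral_const_mul, vΦ, integral_add ja jm]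
  refine mul_le_mul_of_nonneg_right ?_ hC0
  have g1 : α * (∫ p : ℝ × ℝ, (bcR s' c p.2 - 1)^2 * bcF ρ s p.1 ∂(volume.prod (bcG c)) + ∫ p : ℝ × ℝ, (bcR s' c p.2 - 1)^2 * bcF ρ (s+c) (p.1 + p.2) ∂(volume.prod (bcG c))) ≤ α * (κ^2 + κ^2) := by
    gcongr
    rw [wm]; exact wm'
  have g2 : α⁻¹/2 * (bcE ρ s - bcE ρ (s + c)) ≤ α⁻¹/2 * δ^2 := by gcongr
  have g3 : α * (κ^2 + κ^2) + α⁻¹/2 * δ^2 = 2 * κ * δ := by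
    rw [hα]; field_simp; ring
  linarith

end

lemma bc_trivial {s t C : ℝ} (hs : 0 < s) (ht : 0 < t) (hq : 4 * t ≤ s)
    (φ : ℝ → ℝ) (hφ : Continuous φ) (hC : ∀ x, |φ x| ≤ C) :
    |∫ z, φ z ∂(bcG s) - ∫ z, φ z ∂(bcG (s + t))| ≤ t / s * C := by
  have hc : 0 < s + t := by positivity
  have hle : s ≤ s + t := by linarith
  have hC0 : 0 ≤ C := (abs_nonneg _).trans (hC 0)
  set K := bcEta s 0 / bcEta (s+t) 0
  have hrc := bcR_cont s hc
  have hrK : ∀ x, |bcR s (s+t) x| ≤ K := bcR_abs_le hs hle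
  have hK0 : 0 ≤ K := (abs_nonneg _).trans (hrK 0)
  have hqK : ∀ x, |bcR s (s+t) x - 1| ≤ K + 1 := fun x => (abs_sub _ _).trans (by simpa using hrK x)
  have hq1 : t / (s + t) ≤ 1/4 := by rw [div_le_iff₀ hc]; linarith
  have hχ := bc_chi hs ht hq1
  have iq2 : Integrable (fun x => (bcR s (s+t) x - 1)^2) (bcG (s+t)) := by
    refine bc_integrable_of_bdd _ _ (by fun_prop) ((K+1)^2) fun x => ?_
    rw [abs_pow]
    exact pow_le_pow_left₀ (abs_nonneg _) (hqK x) 2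
  have e : ∫ z, φ z ∂(bcG s) - ∫ z, φ z ∂(bcG (s + t)) = ∫ z, (bcR s (s+t) z - 1) * φ z ∂(bcG (s+t)) := by
    rw [← bcR_integral hs hc φ, ← integral_sub]
    · congr 1; ext z; ring
    · refine bc_integrable_of_bdd _ _ (by fun_prop) (K * C) fun p => ?_
      rw [abs_mul]
      exact mul_le_mul (hrK _) (hC _) (abs_nonneg _) hK0
    · exact bc_integrable_of_bdd _ _ hφ C hC
  set κ := t / s with hκ
  have hκ0 : 0 < κ := by positivity
  have hle2 : t/(s+t) ≤ κ := by rw [hκ]; gcongr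
  have h0 : 0 ≤ t/(s+t) := by positivity
  rw [e, ← Real.norm_eq_abs]
  have hb := norm_integral_le_of_norm_le (((iq2.div_const (2*κ)).add (integrable_const (κ/2))).mul_const C)
    (f := fun z => (bcR s (s+t) z - 1) * φ z) (by
      filter_upwards with z
      rw [Real.norm_eq_abs, abs_mul]
      refine mul_le_mul ?_ (hC _) (abs_nonneg _) (by simp only [Pi.add_apply]; positivity)
      simp only [Pi.add_apply]
      rw [div_add_div _ _ (by positivity) (by positivity), le_div_iff₀ (by positivity)]
      nlinarith [sq_nonneg (|bcR s (s+t) z - 1| - κ), sq_abs (bcR s (s+t) z - 1)])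
  refine hb.trans ?_
  rw [integral_mul_const]
  refine mul_le_mul_of_nonneg_right ?_ hC0
  simp only [Pi.add_apply]
  rw [integral_add (iq2.div_const _) (integrable_const _), integral_div]
  have h5 : (∫ x, (bcR s (s+t) x - 1)^2 ∂(bcG (s+t))) / (2*κ) ≤ κ^2 / (2*κ) := by
    gcongr
    nlinarith
  have h6 : κ^2/(2*κ) = κ/2 := by field_simp
  simp
  linarith

end B4

section B5

noncomputable def bcCoin (a : ℝ) : Measure ℝ :=
  (2⁻¹ : ENNReal) • Measure.dirac a + (2⁻¹ : ENNReal) • Measure.dirac (-a)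

instance bcCoin_prob (a : ℝ) : IsProbabilityMeasure (bcCoin a) := by
  constructor
  simp [bcCoin, ENNReal.inv_two_add_inv_two]

noncomputable def bcRho (lam : ℝ) (a : ℕ) : ℕ → Measure ℝ
  | 0 => Measure.dirac 0
  | L + 1 => (bcRho lam a L).conv (bcCoin (lam ^ (a + L)))

instance bcRho_prob (lam : ℝ) (a L : ℕ) : IsProbabilityMeasure (bcRho lam a L) := by
  induction L with
  | zero => unfold bcRho; infer_instance
  | succ L ih => unfold bcRho; infer_instance

lemma bcCoin_integral (a : ℝ) (φ : ℝ → ℝ) : ∫ x, φ x ∂(bcCoin a) = (φ a + φ (-a)) / 2 := by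
  unfold bcCoin
  rw [integral_add_measure, integral_smul_measure, integral_smul_measure, integral_dirac, integral_dirac]
  · simp; ring
  · exact (integrable_dirac (by simp)).smul_measure (by simp)
  · exact (integrable_dirac (by simp)).smul_measure (by simp)

lemma bcCoin_conv_integral (μ : Measure ℝ) [IsProbabilityMeasure μ] (a : ℝ) (φ : ℝ → ℝ) (hφ : Continuous φ) (C : ℝ)
    (hC : ∀ x, |φ x| ≤ C) :
    ∫ x, φ x ∂(μ.conv (bcCoin a)) = (∫ x, φ (x + a) ∂μ + ∫ x, φ (x - a) ∂μ) / 2 := by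
  rw [integral_conv (bc_integrable_of_bdd _ _ hφ C hC)]
  simp_rw [bcCoin_integral]
  rw [integral_div, integral_add]
  · simp [sub_eq_add_neg]
  · exact bc_integrable_of_bdd _ _ (by fun_prop) C fun x => hC _
  · exact bc_integrable_of_bdd _ _ (by fun_prop) C fun x => hC _

lemma bcCoin_ae (μ : Measure ℝ) [IsProbabilityMeasure μ] (a B : ℝ) (h : ∀ᵐ x ∂μ, |x| ≤ B) :
    ∀ᵐ x ∂(μ.conv (bcCoin a)), |x| ≤ B + |a| := by
  have hm : MeasurableSet {x : ℝ | |x| ≤ B + |a|} := measurableSet_le (by fun_prop) (by fun_prop)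
  unfold bcCoin
  rw [Measure.conv_add, Measure.conv_smul_right, Measure.conv_smul_right, Measure.conv_dirac, Measure.conv_dirac, ae_add_measure_iff]
  constructor
  · apply Measure.ae_smul_measure
    rw [ae_map_iff (by fun_prop) hm]
    filter_upwards [h] with x hx
    exact (abs_add_le _ _).trans (by linarith)
  · apply Measure.ae_smul_measure
    rw [ae_map_iff (by fun_prop) hm]
    filter_upwards [h] with x hx
    exact (abs_add_le _ _).trans (by rw [abs_neg]; linarith)

lemma bcRho_ae (lam : ℝ) (h0 : 0 < lam) (h1 : lam < 1) (L : ℕ) : ∀ᵐ x ∂(bcRho lam 0 L), |x| ≤ (1 - lam)⁻¹ := by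
  have key : ∀ L, ∀ᵐ x ∂(bcRho lam 0 L), |x| ≤ ∑ k ∈ Finset.range L, lam ^ k := by
    intro L
    induction L with
    | zero =>
      unfold bcRho
      rw [ae_dirac_iff (measurableSet_le (by fun_prop) (by fun_prop))]
      simp
    | succ L ih =>
      unfold bcRho
      have := bcCoin_ae _ (lam ^ (0 + L)) _ ih
      rw [Finset.sum_range_succ]
      rw [zero_add, abs_of_pos (by positivity)] at this
      rw [zero_add]
      exact this
  filter_upwards [key L] with x hx
  refine hx.trans ?_
  rw [← tsum_geometric_of_lt_one h0.le h1]
  exact (summable_geometric_of_lt_one h0.le h1).sum_le_tsum _ (fun k _ => by positivity)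

lemma bcCoin_map (r a : ℝ) : (bcCoin a).map (fun x => r * x) = bcCoin (r * a) := by
  unfold bcCoin
  have hm : Measurable (fun x : ℝ => r * x) := by fun_prop
  rw [Measure.map_add _ _ hm, Measure.map_smul, Measure.map_smul, Measure.map_dirac' hm, Measure.map_dirac' hm]
  simp

lemma bc_map_conv (r : ℝ) (μ ν : Measure ℝ) [IsProbabilityMeasure μ] [IsProbabilityMeasure ν] :
    (μ.conv ν).map (fun x => r * x) = (μ.map (fun x => r * x)).conv (ν.map (fun x => r * x)) :=
  Measure.map_conv_addMonoidHom (AddMonoidHom.mulLeft r) (by fun_prop : Measurable (fun x : ℝ => r * x))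

lemma bcRho_map (lam : ℝ) (a L : ℕ) : bcRho lam a L = (bcRho lam 0 L).map (fun x => lam ^ a * x) := by
  induction L with
  | zero =>
    unfold bcRho
    rw [Measure.map_dirac' (by fun_prop)]
    simp
  | succ L ih =>
    unfold bcRho
    rw [bc_map_conv, ← ih, bcCoin_map]
    rw [zero_add, pow_add]

lemma bcG_map {r s : ℝ} (hs : 0 ≤ s) : (bcG s).map (fun x => r * x) = bcG (r ^ 2 * s) := by
  unfold bcG
  have := ProbabilityTheory.gaussianReal_map_const_mul (μ := 0) (v := s.toNNReal) r
  rw [this]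
  congr 1
  · simp
  · ext
    simp [hs]
    positivity

lemma bcE_scale (ρ : Measure ℝ) [IsProbabilityMeasure ρ] {r s B : ℝ} (hr : 0 < r) (hs : 0 < s) (hB : ∀ᵐ x ∂ρ, |x| ≤ B) :
    bcE (ρ.map (fun x => r * x)) (r ^ 2 * s) = bcE ρ s - log r := by
  have hm : Measurable (fun x : ℝ => r * x) := by fun_prop
  have : IsProbabilityMeasure (ρ.map (fun x => r * x)) := Measure.isProbabilityMeasure_map hm.aemeasurable
  have h1 : (ρ.map (fun x => r * x)).conv (bcG (r ^ 2 * s)) = (ρ.conv (bcG s)).map (fun x => r * x) := by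
    rw [bc_map_conv, bcG_map hs.le]
  have h2 : ∀ z, bcF (ρ.map (fun x => r * x)) (r ^ 2 * s) (r * z) = r⁻¹ * bcF ρ s z := by
    intro z
    unfold bcF
    have hcc : Continuous (fun x => bcEta (r ^ 2 * s) (r * z - x)) := (bcEta_cont _).comp (by fun_prop)
    rw [integral_map hm.aemeasurable hcc.aestronglyMeasurable, ← integral_const_mul]
    congr 1
    ext x
    unfold bcEta
    rw [show 2 * π * (r ^ 2 * s) = r ^ 2 * (2 * π * s) by ring, sqrt_mul (by positivity), sqrt_sq hr.le, mul_inv, mul_assoc]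
    congr 3
    field_simp
  have hs2 : 0 < r ^ 2 * s := by positivity
  unfold bcE
  rw [h1, integral_map hm.aemeasurable]
  · simp_rw [h2]
    have h3 : ∀ z, log (r⁻¹ * bcF ρ s z) = log (bcF ρ s z) - log r := by
      intro z
      rw [log_mul (by positivity) (bcF_pos ρ hs hB z).ne', log_inv]; ring
    simp_rw [h3]
    rw [integral_sub (bcF_log_integrable ρ hs hB) (integrable_const _)]
    simp
  · exact ((bcF_cont _ hs2).measurable.log).aestronglyMeasurable

lemma bcEta_conv {s : ℝ} (hs : 0 < s) (z : ℝ) : ∫ u, bcEta s (z + u) ∂(bcG s) = bcEta (2 * s) z := by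
  rw [bcG_integral hs]
  have e : ∀ u, bcEta s u * bcEta s (z + u) = (√(2 * π * s))⁻¹ ^ 2 * exp (-z ^ 2 / (2 * (2 * s))) * exp (-(1/s) * (u + z/2) ^ 2) := by
    intro u
    unfold bcEta
    have : exp (-z ^ 2 / (2 * (2 * s))) * exp (-(1/s) * (u + z/2) ^ 2) = exp (-u ^ 2 / (2 * s)) * exp (-(z+u) ^ 2 / (2 * s)) := by
      rw [← exp_add, ← exp_add]
      congr 1
      field_simp
      ring
    linear_combination (-((√(2 * π * s))⁻¹ ^ 2)) * this
  simp_rw [e]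
  rw [integral_const_mul, integral_add_right_eq_self (fun u => exp (-(1/s) * u ^ 2)), integral_gaussian]
  unfold bcEta
  have h1 : (√(2 * π * s))⁻¹ ^ 2 * √(π / (1/s)) = (√(2 * π * (2 * s)))⁻¹ := by
    have hsq : (√(2 * π * s))⁻¹ ^ 2 = (2 * π * s)⁻¹ := by rw [inv_pow, sq_sqrt (by positivity)]
    rw [hsq, ← sqrt_inv]
    rw [show (2 * π * s)⁻¹ = √(((2 * π * s)⁻¹)^2) by rw [sqrt_sq (by positivity)], ← sqrt_mul (by positivity)]
    congr 1
    field_simp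
    try norm_num
  rw [← h1]; ring

lemma bcE_upper (ρ : Measure ℝ) [IsProbabilityMeasure ρ] {s B I : ℝ} (hs : 0 < s) (hB : ∀ᵐ x ∂ρ, |x| ≤ B) (hI : 0 < I)
    (h : ∫ x, ∫ y, bcEta (2 * s) (x - y) ∂ρ ∂ρ ≤ I) : bcE ρ s ≤ log I := by
  have hF : Integrable (bcF ρ s) (ρ.conv (bcG s)) := by
    refine bc_integrable_of_bdd _ _ (bcF_cont ρ hs) (bcEta s 0) fun x => ?_
    rw [abs_of_nonneg (bcF_nonneg ρ hs x)]; exact bcF_le ρ hs x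
  have h1 : ∫ z, bcF ρ s z ∂(ρ.conv (bcG s)) = ∫ x, ∫ y, bcEta (2 * s) (x - y) ∂ρ ∂ρ := by
    rw [integral_conv hF]
    congr 1
    ext x
    unfold bcF
    rw [integral_integral_swap]
    · congr 1
      ext y
      rw [← bcEta_conv hs]
      congr 1
      ext u
      congr 1; ring
    · refine bc_integrable_of_bdd _ _ ?_ (bcEta s 0) fun x => ?_
      · exact (bcEta_cont s).comp (by fun_prop)
      · simp only [Function.uncurry]
        rw [abs_of_pos (bcEta_pos hs _)]; exact bcEta_le hs _
  have h2 : bcE ρ s ≤ ∫ z, (bcF ρ s z / I + (log I - 1)) ∂(ρ.conv (bcG s)) := by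
    unfold bcE
    refine integral_mono (bcF_log_integrable ρ hs hB) ((hF.div_const I).add (integrable_const _)) fun z => ?_
    have hp := bcF_pos ρ hs hB z
    have := log_le_sub_one_of_pos (div_pos hp hI)
    rw [log_div hp.ne' hI.ne'] at this
    simp only
    linarith
  rw [integral_add (hF.div_const I) (integrable_const _), integral_div, h1] at h2
  simp at h2
  have h3 : (∫ x, ∫ y, bcEta (2 * s) (x - y) ∂ρ ∂ρ) / I ≤ 1 := by rw [div_le_one hI]; exact h
  linarith

noncomputable def bcI (lam : ℝ) (g : ℝ → ℝ) (L : ℕ) (t : ℝ) : ℝ :=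
  ∫ x, ∫ y, g (t + (x - y)) ∂(bcRho lam 0 L) ∂(bcRho lam 0 L)

lemma bcI_succ (lam : ℝ) (g : ℝ → ℝ) (hg : Continuous g) (C : ℝ) (hC : ∀ x, |g x| ≤ C) (L : ℕ) (t : ℝ) :
    bcI lam g (L+1) t = (2 * bcI lam g L t + bcI lam g L (t + 2 * lam ^ L) + bcI lam g L (t - 2 * lam ^ L)) / 4 := by
  have hC0 : 0 ≤ C := (abs_nonneg _).trans (hC 0)
  unfold bcI
  rw [show bcRho lam 0 (L+1) = (bcRho lam 0 L).conv (bcCoin (lam ^ (0 + L))) from rfl, zero_add]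
  set ρ := bcRho lam 0 L with hρ
  have hint : ∀ t, Continuous (fun x => ∫ y, g (t + (x - y)) ∂ρ) := by
    intro t
    refine continuous_of_dominated (bound := fun _ => C) ?_ ?_ (integrable_const _) ?_
    · intro z
      exact (hg.comp (by fun_prop)).aestronglyMeasurable
    · intro z
      filter_upwards with x
      exact hC _
    · filter_upwards with x
      exact hg.comp (by fun_prop)
  have hbd : ∀ t x, |∫ y, g (t + (x - y)) ∂ρ| ≤ C := by
    intro t x
    have := norm_integral_le_of_norm_le_const (μ := ρ) (f := fun y => g (t + (x - y))) (C := C) (by filter_upwards with y; exact hC _)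
    simpa using this
  have e1 : ∀ x, ∫ y, g (t + (x - y)) ∂(ρ.conv (bcCoin (lam ^ L))) =
      (∫ y, g (t - lam ^ L + (x - y)) ∂ρ + ∫ y, g (t + lam ^ L + (x - y)) ∂ρ) / 2 := by
    intro x
    rw [bcCoin_conv_integral ρ _ _ (by fun_prop) C fun y => hC _]
    congr 3
    · ext y; congr 1; ring
    · ext y; congr 1; ring
  simp_rw [e1]
  rw [bcCoin_conv_integral ρ _ _ ?_ C ?_]
  · rw [integral_div, integral_div, integral_add, integral_add]
    · have s1 : ∀ x, ∫ y, g (t - lam ^ L + (x + lam ^ L - y)) ∂ρ = ∫ y, g (t + (x - y)) ∂ρ := by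
        intro x; congr 1; ext y; congr 1; ring
      have s2 : ∀ x, ∫ y, g (t + lam ^ L + (x + lam ^ L - y)) ∂ρ = ∫ y, g (t + 2 * lam ^ L + (x - y)) ∂ρ := by
        intro x; congr 1; ext y; congr 1; ring
      have s3 : ∀ x, ∫ y, g (t - lam ^ L + (x - lam ^ L - y)) ∂ρ = ∫ y, g (t - 2 * lam ^ L + (x - y)) ∂ρ := by
        intro x; congr 1; ext y; congr 1; ring
      have s4 : ∀ x, ∫ y, g (t + lam ^ L + (x - lam ^ L - y)) ∂ρ = ∫ y, g (t + (x - y)) ∂ρ := by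
        intro x; congr 1; ext y; congr 1; ring
      simp_rw [s1, s2, s3, s4]
      ring
    · exact bc_integrable_of_bdd _ _ ((hint _).comp (by fun_prop : Continuous fun x : ℝ => x - lam ^ L)) C fun x => hbd _ _
    · exact bc_integrable_of_bdd _ _ ((hint _).comp (by fun_prop : Continuous fun x : ℝ => x - lam ^ L)) C fun x => hbd _ _
    · exact bc_integrable_of_bdd _ _ ((hint _).comp (by fun_prop : Continuous fun x : ℝ => x + lam ^ L)) C fun x => hbd _ _
    · exact bc_integrable_of_bdd _ _ ((hint _).comp (by fun_prop : Continuous fun x : ℝ => x + lam ^ L)) C fun x => hbd _ _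
  · exact ((hint _).add (hint _)).div_const _
  · intro x
    rw [abs_div, div_le_iff₀ (by norm_num)]
    refine (abs_add_le _ _).trans ?_
    have a1 := hbd (t - lam ^ L) x
    have a2 := hbd (t + lam ^ L) x
    norm_num
    linarith

lemma bcI_le_sup (lam : ℝ) (g : ℝ → ℝ) (hg : Continuous g) (C : ℝ) (hC : ∀ x, |g x| ≤ C) (M : ℝ) (L : ℕ) :
    ∀ t : ℝ, (∀ e : ℕ → ℤ, (∀ k, |e k| ≤ 1) → g (t + 2 * ∑ k ∈ Finset.range L, (e k : ℝ) * lam ^ k) ≤ M) →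
      bcI lam g L t ≤ M := by
  induction L with
  | zero =>
    intro t h
    have := h (fun _ => 0) (by simp)
    simp [bcI, bcRho] at this ⊢
    exact this
  | succ L ih =>
    intro t h
    have hupd : ∀ v : ℤ, |v| ≤ 1 → bcI lam g L (t + 2 * (v * lam ^ L)) ≤ M := by
      intro v hv
      apply ih
      intro e he
      have := h (fun k => if k = L then v else e k) (by intro k; split_ifs; exacts [hv, he k])
      rw [Finset.sum_range_succ] at this
      simp only [if_true] at this
      have e2 : ∑ k ∈ Finset.range L, ((if k = L then v else e k : ℤ) : ℝ) * lam ^ k = ∑ k ∈ Finset.range L, (e k : ℝ) * lam ^ k := by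
        refine Finset.sum_congr rfl fun k hk => ?_
        rw [if_neg (by simp at hk; omega)]
      rw [e2] at this
      convert this using 2
      ring
    rw [bcI_succ lam g hg C hC]
    have a1 := hupd 0 (by norm_num)
    have a2 := hupd 1 (by norm_num)
    have a3 := hupd (-1) (by norm_num)
    simp at a1 a2 a3
    rw [← sub_eq_add_neg] at a3
    linarith

lemma bcI_le (lam : ℝ) (g : ℝ → ℝ) (hg : Continuous g) (C : ℝ) (hC : ∀ x, |g x| ≤ C) (M : ℝ) (hM : 0 ≤ M) (L : ℕ)
    (h : ∀ e : ℕ → ℤ, (∀ k, |e k| ≤ 1) → (∃ k < L, e k ≠ 0) → g (2 * ∑ k ∈ Finset.range L, (e k : ℝ) * lam ^ k) ≤ M) :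
      bcI lam g L 0 ≤ g 0 / 2 ^ L + M := by
  induction L with
  | zero =>
    simp [bcI, bcRho]
    exact hM
  | succ L ih =>
    have hupd : ∀ v : ℤ, |v| ≤ 1 → v ≠ 0 → bcI lam g L (0 + 2 * (v * lam ^ L)) ≤ M := by
      intro v hv hv0
      apply bcI_le_sup lam g hg C hC
      intro e he
      have := h (fun k => if k = L then v else e k) (by intro k; split_ifs; exacts [hv, he k])
        ⟨L, by omega, by simpa using hv0⟩
      rw [Finset.sum_range_succ] at this
      simp only [if_true] at this
      have e2 : ∑ k ∈ Finset.range L, ((if k = L then v else e k : ℤ) : ℝ) * lam ^ k = ∑ k ∈ Finset.range L, (e k : ℝ) * lam ^ k := by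
        refine Finset.sum_congr rfl fun k hk => ?_
        rw [if_neg (by simp at hk; omega)]
      rw [e2] at this
      convert this using 2
      ring
    have a1 := ih (by
      intro e he ⟨k, hk, hk0⟩
      have := h (fun k => if k = L then 0 else e k) (by intro k; split_ifs; exacts [by simp, he k])
        ⟨k, by omega, by rw [if_neg (by omega)]; exact hk0⟩
      rw [Finset.sum_range_succ] at this
      simp only [if_true] at this
      have e2 : ∑ k ∈ Finset.range L, ((if k = L then 0 else e k : ℤ) : ℝ) * lam ^ k = ∑ k ∈ Finset.range L, (e k : ℝ) * lam ^ k := by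
        refine Finset.sum_congr rfl fun k hk => ?_
        rw [if_neg (by simp at hk; omega)]
      rw [e2] at this
      simpa using this)
    rw [bcI_succ lam g hg C hC]
    have a2 := hupd 1 (by norm_num) (by norm_num)
    have a3 := hupd (-1) (by norm_num) (by norm_num)
    simp at a2 a3
    rw [zero_add, zero_sub]
    have e3 : g 0 / 2 ^ (L+1) = (g 0 / 2 ^ L) / 2 := by rw [pow_succ]; field_simp
    rw [e3]
    linarith

lemma bc_entropy_upper (lam β c1 : ℝ) (hl0 : 0 < lam) (hl1 : lam < 1) (hβ : 2 < β) (hc1 : 0 < c1)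
    (hsep : ∀ (L : ℕ) (e : ℕ → ℤ), (∀ k, |e k| ≤ 1) → (∃ k < L, e k ≠ 0) →
      c1 / β ^ L ≤ |∑ k ∈ Finset.range L, (e k : ℝ) * lam ^ k|) (L : ℕ) (hL : 1 ≤ L) :
    bcE (bcRho lam 0 L) ((c1 / β ^ L) ^ 2 / L) ≤ L * log (β / 2) + 1/2 * log L + (log 2 - log c1) := by
  set δ := c1 / β ^ L with hδ
  have hδ0 : 0 < δ := by positivity
  have hL0 : (0:ℝ) < L := by exact_mod_cast hL
  set s := δ ^ 2 / L with hs
  have hs0 : 0 < s := by positivity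
  have h2s : 0 < 2 * s := by positivity
  set g := bcEta (2 * s) with hg
  have hg0 : 0 < g 0 := bcEta_pos h2s 0
  have hI := bcI_le lam g (bcEta_cont _) (g 0) (fun x => by rw [abs_of_pos (bcEta_pos h2s x)]; exact bcEta_le h2s x)
    (g 0 / 2 ^ L) (by positivity) L (by
      intro e he hex
      have h1 := hsep L e he hex
      set S := ∑ k ∈ Finset.range L, (e k : ℝ) * lam ^ k
      rw [hg, bcEta_zero_mul, div_eq_mul_inv]
      refine mul_le_mul_of_nonneg_left ?_ hg0.le
      have h2 : δ ^ 2 ≤ S ^ 2 := by rw [← sq_abs S]; exact pow_le_pow_left₀ hδ0.le h1 2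
      have h3 : -(2 * S) ^ 2 / (2 * (2 * s)) ≤ -(L:ℝ) := by
        rw [div_le_iff₀ (by positivity), hs]
        have : -(L:ℝ) * (2 * (2 * (δ ^ 2 / L))) = -4 * δ^2 := by field_simp; ring
        rw [this]; nlinarith
      refine (exp_le_exp.mpr h3).trans ?_
      rw [exp_neg]
      apply inv_anti₀ (by positivity)
      have : exp (L:ℝ) = exp 1 ^ L := by rw [← exp_nat_mul, mul_one]
      rw [this]
      gcongr
      have := Real.add_one_le_exp (1:ℝ)
      linarith)
  have hU := bcE_upper (bcRho lam 0 L) hs0 (bcRho_ae lam hl0 hl1 L) (I := g 0 / 2 ^ L + g 0 / 2 ^ L) (by positivity) (by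
    have : bcI lam g L 0 = ∫ x, ∫ y, bcEta (2 * s) (x - y) ∂(bcRho lam 0 L) ∂(bcRho lam 0 L) := by
      unfold bcI; simp [hg]
    rw [← this]; exact hI)
  refine hU.trans ?_
  have e1 : g 0 / 2 ^ L + g 0 / 2 ^ L = g 0 * (2 / 2 ^ L) := by ring
  rw [e1, log_mul hg0.ne' (by positivity), log_div (by positivity) (by positivity), log_pow, log_div (by positivity) (by positivity)]
  have hg1 : log (g 0) ≤ -(1/2) * log s := by
    have : g 0 = (√(2 * π * (2 * s)))⁻¹ := by simp [hg, bcEta]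
    rw [this, log_inv, Real.log_sqrt (by positivity)]
    have : log s ≤ log (2 * π * (2 * s)) := log_le_log hs0 (by nlinarith [pi_gt_three])
    linarith
  have hls : log s = 2 * (log c1 - L * log β) - log L := by
    rw [hs, log_div (by positivity) (by positivity), log_pow, hδ, log_div (by positivity) (by positivity), log_pow]
    norm_num
  rw [hls] at hg1
  linarith

end B5

section B6

lemma bcE_anti2 (ρ : Measure ℝ) [IsProbabilityMeasure ρ] {s s' B : ℝ} (hs : 0 < s) (h : s ≤ s') (hB : ∀ᵐ x ∂ρ, |x| ≤ B) :
    bcE ρ s' ≤ bcE ρ s := by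
  rcases h.eq_or_lt with h | h
  · rw [h]
  · have := bcE_anti ρ (s := s) (c := s' - s) hs (by linarith) hB
    rwa [add_sub_cancel] at this

lemma bc_log_event (C : ℝ) : ∃ L0 : ℕ, ∀ L : ℕ, L0 ≤ L → (L:ℝ) * 0.0005 + 1/2 * log L + C < ((L:ℝ) - 5) / 6 / 144 := by
  have h1 : (fun x : ℝ => log x) =o[Filter.atTop] (fun x : ℝ => x) := Real.isLittleO_log_id_atTop
  have h2 := (h1.comp_tendsto tendsto_natCast_atTop_atTop).bound (by norm_num : (0:ℝ) < 0.0005)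
  have h3 : ∀ᶠ L : ℕ in Filter.atTop, (C + 1) / 0.0002 ≤ (L:ℝ) := tendsto_natCast_atTop_atTop.eventually_ge_atTop _
  obtain ⟨L0, hL0⟩ := Filter.eventually_atTop.mp (h2.and h3)
  refine ⟨L0, fun L hL => ?_⟩
  obtain ⟨a, b⟩ := hL0 L hL
  simp only [Function.comp, norm_eq_abs, Nat.abs_cast] at a
  have := (le_abs_self _).trans a
  rw [div_le_iff₀ (by norm_num)] at b
  linarith

lemma bc_min_pow {q : ℝ} (hq : 1 < q) {v w : ℝ} (hv : 0 < v) (h : v ≤ w) : ∃ b : ℕ, w ≤ v * q ^ b ∧ v * q ^ b ≤ q * w := by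
  have hex : ∃ b : ℕ, w ≤ v * q ^ b := by
    obtain ⟨b, hb⟩ := pow_unbounded_of_one_lt (w / v) hq
    exact ⟨b, by rw [div_lt_iff₀ hv] at hb; linarith⟩
  classical
  refine ⟨Nat.find hex, Nat.find_spec hex, ?_⟩
  rcases Nat.eq_zero_or_pos (Nat.find hex) with h0 | h0
  · rw [h0]; simp; nlinarith
  · have := Nat.find_min hex (m := Nat.find hex - 1) (by omega)
    push Not at this
    have e : q ^ (Nat.find hex) = q * q ^ (Nat.find hex - 1) := by rw [← pow_succ']; congr 1; omega
    rw [e]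
    nlinarith

lemma bc_good (lam β c1 : ℝ) (hl0 : 0 < lam) (hl1 : lam < 1) (hl4 : 1/2 ≤ lam ^ 4) (hβ : 2 < β) (hβ2 : β ≤ 2.001) (hc1 : 0 < c1)
    (hsep : ∀ (L : ℕ) (e : ℕ → ℤ), (∀ k, |e k| ≤ 1) → (∃ k < L, e k ≠ 0) →
      c1 / β ^ L ≤ |∑ k ∈ Finset.range L, (e k : ℝ) * lam ^ k|) :
    ∃ L0 : ℕ, 1 ≤ L0 ∧ ∀ L, L0 ≤ L → ∀ v : ℝ, 0 < v → v ≤ (β ^ (2 * L))⁻¹ → ∃ b : ℕ,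
      v / (lam ^ 2) ^ (b + L) ≤ (β ^ L)⁻¹ ∧
      bcE (bcRho lam 0 L) (v / (lam ^ 2) ^ b / 4) - bcE (bcRho lam 0 L) (5 * (v / (lam ^ 2) ^ b) / 4) ≤ 1/144 := by
  set K := log (bcEta 1 0) - (∫ u, (|u| + 2 * (1 - lam)⁻¹) ^ 2 ∂(bcG 1)) / 2 with hK
  obtain ⟨L1, hL1⟩ := bc_log_event (log 2 - log c1 - K)
  obtain ⟨L2, hL2⟩ := exists_nat_ge (4 * c1 ^ 2)
  refine ⟨max 1 (max L1 L2), le_max_left _ _, fun L hL v hv hvβ => ?_⟩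
  have hLa : 1 ≤ L := (le_max_left _ _).trans hL
  have hLb := hL1 L ((le_max_left _ _).trans ((le_max_right _ _).trans hL))
  have hLc : 4 * c1 ^ 2 ≤ L := hL2.trans (by exact_mod_cast (le_max_right _ _).trans ((le_max_right _ _).trans hL))
  have hβ0 : 0 < β := by linarith
  have hLpos : (0:ℝ) < L := by exact_mod_cast hLa
  set q := (lam ^ 2)⁻¹ with hq
  have hq1 : 1 < q := by
    rw [hq]; apply one_lt_inv_iff₀.mpr; constructor
    · positivity
    · nlinarith
  have hqq : q ^ 2 ≤ 2 := by
    rw [hq, inv_pow, ← pow_mul, show (2:ℝ) = (1/2)⁻¹ by norm_num]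
    exact inv_anti₀ (by norm_num) hl4
  have hq15 : q ≤ 1.5 := by nlinarith
  have hdiv : ∀ x : ℝ, ∀ b : ℕ, x / (lam ^ 2) ^ b = x * q ^ b := by
    intro x b; rw [hq, inv_pow, div_eq_mul_inv]
  simp_rw [hdiv]
  obtain ⟨b0, hb0, hb0'⟩ := bc_min_pow hq1 hv hvβ
  obtain ⟨p, hp, hp'⟩ := bc_min_pow hq1 one_pos (by norm_num : (1:ℝ) ≤ 5)
  rw [one_mul] at hp hp'
  set r := q ^ p with hr
  have hr8 : r ≤ 8 := by linarith
  have hβ3 : (8:ℝ) ≤ β ^ 3 := by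
    calc (8:ℝ) = 2 ^ 3 := by norm_num
      _ ≤ β ^ 3 := by gcongr
  set E := bcE (bcRho lam 0 L) with hE
  have hB := bcRho_ae lam hl0 hl1 L
  set w : ℕ → ℝ := fun i => v * q ^ b0 * r ^ i with hw
  have hw0 : ∀ i, 0 < w i := fun i => by positivity
  have hwle : ∀ i, w i ≤ 1.5 * (β ^ (2 * L))⁻¹ * β ^ (3 * i) := by
    intro i
    have h1 : v * q ^ b0 ≤ 1.5 * (β ^ (2*L))⁻¹ := hb0'.trans (by gcongr)
    have h2 : r ^ i ≤ β ^ (3 * i) := by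
      rw [pow_mul]; gcongr; linarith
    exact mul_le_mul h1 h2 (by positivity) (by positivity)
  have hws : ∀ i, 5 * w i ≤ w (i+1) := by
    intro i
    have : w (i+1) = r * w i := by simp only [hw, pow_succ]; ring
    rw [this]
    exact mul_le_mul_of_nonneg_right hp (hw0 i).le
  by_contra hcon
  push Not at hcon
  set N := L / 6 with hN
  have hd : ∀ i < N, 1/144 < E (w i / 4) - E (w (i+1) / 4) := by
    intro i hi
    have hwi : v * q ^ (b0 + p * i) = w i := by
      simp only [hw, hr]; rw [pow_add, pow_mul]; ring
    have hcond : v * q ^ (b0 + p * i + L) ≤ (β ^ L)⁻¹ := by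
      rw [pow_add, ← mul_assoc, hwi]
      refine (sq_le_sq₀ (by have := hw0 i; positivity) (by positivity)).mp ?_
      have e1 : (w i) ^ 2 ≤ (1.5 * (β ^ (2 * L))⁻¹ * β ^ (3 * i)) ^ 2 := by
        have := hwle i
        have := hw0 i
        gcongr
      have e2 : (q ^ L) ^ 2 ≤ β ^ L := by
        rw [← pow_mul, mul_comm, pow_mul]
        gcongr; linarith
      have e3 : (1.5:ℝ) ^ 2 * β ^ (6 * i) ≤ β ^ L := by
        have : (1.5:ℝ)^2 ≤ β ^ 2 := by gcongr; norm_num; linarith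
        calc (1.5:ℝ) ^ 2 * β ^ (6 * i) ≤ β ^ 2 * β ^ (6 * i) := by gcongr
          _ = β ^ (2 + 6 * i) := by rw [pow_add]
          _ ≤ β ^ L := by
            apply pow_le_pow_right₀ (by linarith)
            omega
      rw [mul_pow]
      calc (w i) ^ 2 * (q ^ L) ^ 2 ≤ (1.5 * (β ^ (2 * L))⁻¹ * β ^ (3 * i)) ^ 2 * β ^ L := by gcongr
        _ = (1.5 ^ 2 * β ^ (6 * i)) * (((β ^ L)⁻¹) ^ 4 * β ^ L) := by
          rw [show 6 * i = 3 * i * 2 by ring, show 2 * L = L * 2 by ring, pow_mul _ (3*i), pow_mul _ L]; ring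
        _ ≤ β ^ L * (((β ^ L)⁻¹) ^ 4 * β ^ L) := by gcongr
        _ = ((β ^ L)⁻¹) ^ 2 := by
          have : β ^ L ≠ 0 := by positivity
          field_simp
    have h1 := hcon _ hcond
    rw [hwi] at h1
    have h2 : E (w (i+1) / 4) ≤ E (5 * w i / 4) :=
      bcE_anti2 _ (by have := hw0 i; positivity) (by linarith [hws i]) hB
    linarith
  have htel : ∀ M ≤ N, (M:ℝ) / 144 ≤ E (w 0 / 4) - E (w M / 4) := by
    intro M
    induction M with
    | zero => intro _; simp
    | succ M ih =>
      intro hM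
      have := ih (by omega)
      have := hd M (by omega)
      push_cast
      linarith
  have ht := htel N le_rfl
  have hlow : K ≤ E (w N / 4) := by
    refine (bcE_one_ge _ hB).trans ?_
    apply bcE_anti2 _ (by have := hw0 N; positivity) ?_ hB
    have h1 := hwle N
    have h2 : β ^ (3 * N) ≤ β ^ (2 * L) := pow_le_pow_right₀ (by linarith) (by omega)
    have h3 : (β ^ (2 * L))⁻¹ * β ^ (3 * N) ≤ 1 := by
      rw [inv_mul_le_iff₀ (by positivity), mul_one]; exact h2
    nlinarith
  have hup : E (w 0 / 4) ≤ L * log (β / 2) + 1/2 * log L + (log 2 - log c1) := by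
    refine le_trans ?_ (bc_entropy_upper lam β c1 hl0 hl1 hβ hc1 hsep L hLa)
    apply bcE_anti2 _ (by positivity) ?_ hB
    have e : w 0 = v * q ^ b0 := by simp [hw]
    rw [e, div_pow, ← pow_mul, mul_comm L 2]
    refine le_trans ?_ (div_le_div_of_nonneg_right hb0 (by norm_num))
    rw [div_le_div_iff₀ hLpos (by norm_num), div_eq_mul_inv, mul_right_comm]
    have : c1 ^ 2 * 4 ≤ L := by linarith
    rw [mul_comm _ (L:ℝ)]
    gcongr
  have hlog : log (β / 2) ≤ 0.0005 := by
    have := log_le_sub_one_of_pos (by positivity : 0 < β / 2)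
    linarith
  have hNL : ((L:ℝ) - 5) / 6 ≤ N := by
    have : L ≤ 6 * N + 5 := by omega
    have : (L:ℝ) ≤ 6 * N + 5 := by exact_mod_cast this
    linarith
  have : (L:ℝ) * log (β/2) ≤ L * 0.0005 := by gcongr
  linarith

end B6

section B7

open scoped BoundedContinuousFunction

lemma bcTop_cont (ν : Measure ℝ) [IsProbabilityMeasure ν] (φ : ℝ →ᵇ ℝ) : Continuous fun y => ∫ x, φ (y + x) ∂ν := by
  refine continuous_of_dominated (bound := fun _ => ‖φ‖) ?_ ?_ (integrable_const _) ?_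
  · intro z
    exact (φ.continuous.comp (by fun_prop)).aestronglyMeasurable
  · intro z
    filter_upwards with x
    exact φ.norm_coe_le_norm _
  · filter_upwards with x
    exact φ.continuous.comp (by fun_prop)

lemma bcTop_bd (ν : Measure ℝ) [IsProbabilityMeasure ν] (φ : ℝ →ᵇ ℝ) (y : ℝ) : ‖∫ x, φ (y + x) ∂ν‖ ≤ ‖φ‖ := by
  have := norm_integral_le_of_norm_le_const (μ := ν) (f := fun x => φ (y + x)) (C := ‖φ‖)
    (by filter_upwards with x; exact φ.norm_coe_le_norm _)
  simpa using this

lemma bc_bcf_int (ν : Measure ℝ) [IsProbabilityMeasure ν] (φ : ℝ →ᵇ ℝ) (y : ℝ) : Integrable (fun x => φ (y + x)) ν :=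
  bc_integrable_of_bdd _ _ (φ.continuous.comp (by fun_prop)) ‖φ‖ fun x => φ.norm_coe_le_norm _

def BcOp : Type := (ℝ →ᵇ ℝ) →L[ℝ] (ℝ →ᵇ ℝ)

noncomputable instance BcOp_ring : NormedRing BcOp :=
  inferInstanceAs (NormedRing ((ℝ →ᵇ ℝ) →L[ℝ] (ℝ →ᵇ ℝ)))

noncomputable def BcOp.ev (T : BcOp) (φ : ℝ →ᵇ ℝ) : ℝ →ᵇ ℝ :=
  (show (ℝ →ᵇ ℝ) →L[ℝ] (ℝ →ᵇ ℝ) from T) φ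

lemma BcOp.ev_sub (S T : BcOp) (φ : ℝ →ᵇ ℝ) : (S - T).ev φ = S.ev φ - T.ev φ := rfl

lemma BcOp.ev_mul (S T : BcOp) (φ : ℝ →ᵇ ℝ) : (S * T).ev φ = S.ev (T.ev φ) := rfl

lemma BcOp.ev_norm (T : BcOp) (φ : ℝ →ᵇ ℝ) : ‖T.ev φ‖ ≤ ‖T‖ * ‖φ‖ :=
  ContinuousLinearMap.le_opNorm (show (ℝ →ᵇ ℝ) →L[ℝ] (ℝ →ᵇ ℝ) from T) φ

lemma BcOp.norm_le (T : BcOp) (K : ℝ) (hK : 0 ≤ K) (h : ∀ φ, ‖T.ev φ‖ ≤ K * ‖φ‖) : ‖T‖ ≤ K :=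
  ContinuousLinearMap.opNorm_le_bound (show (ℝ →ᵇ ℝ) →L[ℝ] (ℝ →ᵇ ℝ) from T) hK h

lemma BcOp.ext_ev {S T : BcOp} (h : ∀ φ y, S.ev φ y = T.ev φ y) : S = T :=
  ContinuousLinearMap.ext fun φ => BoundedContinuousFunction.ext fun y => h φ y

noncomputable def bcTop (ν : Measure ℝ) [IsProbabilityMeasure ν] : BcOp :=
  show (ℝ →ᵇ ℝ) →L[ℝ] (ℝ →ᵇ ℝ) from
  LinearMap.mkContinuous
    { toFun := fun φ => BoundedContinuousFunction.ofNormedAddCommGroup (fun y => ∫ x, φ (y + x) ∂ν)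
        (bcTop_cont ν φ) ‖φ‖ (bcTop_bd ν φ)
      map_add' := fun φ ψ => by
        ext y
        simp only [BoundedContinuousFunction.coe_ofNormedAddCommGroup, BoundedContinuousFunction.coe_add, Pi.add_apply]
        exact integral_add (bc_bcf_int ν φ y) (bc_bcf_int ν ψ y)
      map_smul' := fun c φ => by
        ext y
        simp only [BoundedContinuousFunction.coe_ofNormedAddCommGroup, BoundedContinuousFunction.coe_smul, RingHom.id_apply, smul_eq_mul]
        exact integral_const_mul _ _ } 1
    (fun φ => by
      rw [one_mul]
      exact BoundedContinuousFunction.norm_ofNormedAddCommGroup_le _ (norm_nonneg _) (bcTop_bd ν φ))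

lemma bcTop_apply (ν : Measure ℝ) [IsProbabilityMeasure ν] (φ : ℝ →ᵇ ℝ) (y : ℝ) :
    (bcTop ν).ev φ y = ∫ x, φ (y + x) ∂ν := rfl

lemma bcTop_norm (ν : Measure ℝ) [IsProbabilityMeasure ν] : ‖bcTop ν‖ ≤ 1 :=
  BcOp.norm_le _ _ zero_le_one fun φ => by
    rw [BoundedContinuousFunction.norm_le (by positivity), one_mul]
    exact bcTop_bd ν φ

lemma bcTop_congr {μ ν : Measure ℝ} [IsProbabilityMeasure μ] [IsProbabilityMeasure ν] (h : μ = ν) : bcTop μ = bcTop ν := by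
  subst h; rfl

lemma bcTop_mul (μ ν : Measure ℝ) [IsProbabilityMeasure μ] [IsProbabilityMeasure ν] :
    bcTop (μ.conv ν) = bcTop μ * bcTop ν := by
  refine BcOp.ext_ev fun φ y => ?_
  rw [BcOp.ev_mul, bcTop_apply, bcTop_apply, integral_conv (bc_bcf_int _ φ y)]
  simp_rw [bcTop_apply, add_assoc]

lemma bcTop_comm (μ ν : Measure ℝ) [IsProbabilityMeasure μ] [IsProbabilityMeasure ν] : Commute (bcTop μ) (bcTop ν) := by
  unfold Commute SemiconjBy
  rw [← bcTop_mul, ← bcTop_mul]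
  exact bcTop_congr (Measure.conv_comm _ _)

lemma bcTop_sub_le (μ ν : Measure ℝ) [IsProbabilityMeasure μ] [IsProbabilityMeasure ν] (K : ℝ) (hK : 0 ≤ K)
    (h : ∀ φ : ℝ → ℝ, Continuous φ → ∀ C, (∀ x, |φ x| ≤ C) → |∫ x, φ x ∂μ - ∫ x, φ x ∂ν| ≤ K * C) :
    ‖bcTop μ - bcTop ν‖ ≤ K := by
  refine BcOp.norm_le _ _ hK fun φ => ?_
  rw [BoundedContinuousFunction.norm_le (by positivity)]
  intro y
  exact h (fun x => φ (y + x)) (φ.continuous.comp (by fun_prop)) _ fun x => φ.norm_coe_le_norm _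

noncomputable def bcH (s : ℝ) : BcOp := bcTop (bcG s)

lemma bcH_norm (s : ℝ) : ‖bcH s‖ ≤ 1 := bcTop_norm _

lemma bcH_mul {s t : ℝ} (hs : 0 ≤ s) (ht : 0 ≤ t) : bcH s * bcH t = bcH (s + t) := by
  unfold bcH
  rw [← bcTop_mul]
  exact bcTop_congr (bcG_conv hs ht)

lemma bcH_pow {s : ℝ} (hs : 0 ≤ s) (k : ℕ) : bcH s ^ (k+1) = bcH ((k+1) * s) := by
  induction k with
  | zero => simp
  | succ k ih =>
    rw [pow_succ, ih, bcH_mul (by positivity) hs]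
    congr 1; push_cast; ring

lemma bcH_comm (s t : ℝ) : Commute (bcH s) (bcH t) := bcTop_comm _ _

lemma bcTH_comm (μ : Measure ℝ) [IsProbabilityMeasure μ] (t : ℝ) : Commute (bcTop μ) (bcH t) := bcTop_comm _ _

lemma bc_piece (ρ : Measure ℝ) [IsProbabilityMeasure ρ] {B σ t : ℝ} (hB : ∀ᵐ x ∂ρ, |x| ≤ B) (hσ : 0 < σ) (ht : 0 < t)
    (htσ : t ≤ σ / 4) (hE : bcE ρ (σ / 4) - bcE ρ (5 * σ / 4) ≤ 1/144) :
    ‖bcTop ρ * (bcH σ * (1 - bcH t))‖ ≤ t / (6 * σ) := by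
  have e : bcTop ρ * (bcH σ * (1 - bcH t)) = bcTop (ρ.conv (bcG σ)) - bcTop (ρ.conv (bcG (σ + t))) := by
    rw [bcTop_mul, bcTop_mul, mul_sub, mul_one, bcH_mul hσ.le ht.le, mul_sub]
    rfl
  rw [e]
  refine bcTop_sub_le _ _ _ (by positivity) fun φ hφ C hC => ?_
  have h1 : (ρ.conv (bcG (σ/4))).conv (bcG (3*σ/4)) = ρ.conv (bcG σ) := by
    rw [Measure.conv_assoc, bcG_conv (by positivity) (by positivity)]
    congr 2; ring
  have h2 : (ρ.conv (bcG (σ/4))).conv (bcG (3*σ/4+t)) = ρ.conv (bcG (σ+t)) := by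
    rw [Measure.conv_assoc, bcG_conv (by positivity) (by positivity)]
    congr 2; ring
  have := bc_lemmaA ρ (B := B) (s := σ/4) (s' := 3*σ/4) (t := t) (κ := t/σ) (δ := 1/12) (C := C) hB (by positivity) (by positivity) ht
    (by rw [div_le_iff₀ (by positivity)]; linarith) (by positivity)
    (by
      have : t / (3*σ/4+t) ≤ 4/3 * (t/σ) := by
        rw [div_le_iff₀ (by positivity)]
        have : 4/3 * (t/σ) * (3*σ/4+t) = t + 4/3 * (t/σ) * t := by field_simp
        rw [this]
        have : 0 ≤ 4/3 * (t/σ) * t := by positivity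
        linarith
      have : (t / (3*σ/4+t)) ^ 2 ≤ (4/3 * (t/σ)) ^ 2 := pow_le_pow_left₀ (by positivity) this 2
      nlinarith) (by norm_num)
    (by
      have : bcE ρ (5 * σ / 4) ≤ bcE ρ (σ/4 + (3*σ/4+t)) := bcE_anti2 ρ (by positivity) (by linarith) hB
      norm_num at hE ⊢
      linarith) φ hφ hC
  rw [h1, h2] at this
  refine this.trans (le_of_eq ?_)
  field_simp
  ring

lemma bc_ktriv {s t : ℝ} (hs : 0 < s) (ht : 0 < t) (hq : 4 * t ≤ s) : ‖bcH s * (1 - bcH t)‖ ≤ t / s := by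
  rw [mul_sub, mul_one, bcH_mul hs.le ht.le]
  exact bcTop_sub_le _ _ _ (by positivity) fun φ hφ C hC => bc_trivial hs ht hq φ hφ hC

lemma bc_mu_split (lam : ℝ) (μ : ℕ → Measure ℝ) [∀ a, IsProbabilityMeasure (μ a)]
    (hμ : ∀ a, μ a = (bcCoin (lam ^ a)).conv (μ (a+1))) (a L : ℕ) : μ a = (bcRho lam a L).conv (μ (a + L)) := by
  induction L with
  | zero => unfold bcRho; simp
  | succ L ih =>
    rw [show bcRho lam a (L+1) = (bcRho lam a L).conv (bcCoin (lam ^ (a+L))) from rfl, Measure.conv_assoc, ← add_assoc, ← hμ]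
    exact ih

lemma bc_S (lam β : ℝ) (hl0 : 0 < lam) (hl1 : lam < 1) (L0 : ℕ)
    (hgood : ∀ L, L0 ≤ L → ∀ v : ℝ, 0 < v → v ≤ (β ^ (2 * L))⁻¹ → ∃ b : ℕ,
      v / (lam ^ 2) ^ (b + L) ≤ (β ^ L)⁻¹ ∧
      bcE (bcRho lam 0 L) (v / (lam ^ 2) ^ b / 4) - bcE (bcRho lam 0 L) (5 * (v / (lam ^ 2) ^ b) / 4) ≤ 1/144)
    (μ : ℕ → Measure ℝ) [∀ a, IsProbabilityMeasure (μ a)]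
    (hμ : ∀ a, μ a = (bcCoin (lam ^ a)).conv (μ (a+1))) (σ t : ℝ) (hσ : 0 < σ) (ht : 0 < t) (htσ : t ≤ σ / 4) (k : ℕ) :
    ∀ a : ℕ, σ / (lam ^ 2) ^ a ≤ (β ^ (2 ^ k * L0))⁻¹ →
      ‖bcTop (μ a) * (bcH σ * (1 - bcH t)) ^ k‖ ≤ (t / (6 * σ)) ^ k := by
  induction k with
  | zero =>
    intro a _
    simpa using bcTop_norm (μ a)
  | succ k ih =>
    intro a ha
    obtain ⟨b, hb1, hb2⟩ := hgood (2 ^ k * L0) (Nat.le_mul_of_pos_left _ (by positivity)) (σ / (lam ^ 2) ^ a) (by positivity)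
      (by rw [← mul_assoc, ← pow_succ']; exact ha)
    set L := 2 ^ k * L0 with hL
    set X := bcH σ * (1 - bcH t) with hX
    have hdd : ∀ j : ℕ, σ / (lam ^ 2) ^ a / (lam ^ 2) ^ j = σ / (lam ^ 2) ^ (a + j) := by
      intro j; rw [div_div, ← pow_add]
    rw [hdd] at hb1 hb2
    have h1 := ih (a + b + L) (by rw [add_assoc]; exact hb1)
    have hB := bcRho_ae lam hl0 hl1 L
    have hr : 0 < lam ^ (a + b) := by positivity
    have hsc : ∀ c : ℝ, 0 < c → bcE (bcRho lam (a+b) L) c = bcE (bcRho lam 0 L) (c / (lam ^ 2) ^ (a+b)) - log (lam ^ (a + b)) := by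
      intro c hc
      have := bcE_scale (bcRho lam 0 L) (r := lam ^ (a+b)) (s := c / (lam ^ 2) ^ (a+b)) hr (by positivity) hB
      rw [← bcRho_map] at this
      rw [← this]
      congr 1
      rw [← pow_mul, ← pow_mul, mul_comm 2]
      field_simp
    have hB2 : ∀ᵐ x ∂(bcRho lam (a+b) L), |x| ≤ lam ^ (a+b) * (1 - lam)⁻¹ := by
      rw [bcRho_map, ae_map_iff (by fun_prop) (measurableSet_le (by fun_prop) (by fun_prop))]
      filter_upwards [hB] with x hx
      rw [abs_mul, abs_of_pos hr]
      gcongr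
    have h2 : ‖bcTop (bcRho lam (a+b) L) * X‖ ≤ t / (6 * σ) := by
      apply bc_piece _ hB2 hσ ht htσ
      rw [hsc _ (by positivity), hsc _ (by positivity)]
      have e1 : σ / 4 / (lam ^ 2) ^ (a+b) = σ / (lam ^ 2) ^ (a+b) / 4 := by ring
      have e2 : 5 * σ / 4 / (lam ^ 2) ^ (a+b) = 5 * (σ / (lam ^ 2) ^ (a+b)) / 4 := by ring
      rw [e1, e2]
      linarith
    have hT : bcTop (μ a) = bcTop (bcRho lam a b) * (bcTop (bcRho lam (a+b) L) * bcTop (μ (a+b+L))) := by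
      rw [← bcTop_mul, ← bcTop_mul]
      apply bcTop_congr
      rw [← bc_mu_split lam μ hμ, ← bc_mu_split lam μ hμ]
    have hc : bcTop (μ (a+b+L)) * X = X * bcTop (μ (a+b+L)) :=
      ((bcTH_comm _ _).mul_right ((Commute.one_right _).sub_right (bcTH_comm _ _))).eq
    have e : bcTop (μ a) * X ^ (k+1) = bcTop (bcRho lam a b) * ((bcTop (bcRho lam (a+b) L) * X) * (bcTop (μ (a+b+L)) * X ^ k)) := by
      rw [hT, pow_succ']
      simp only [mul_assoc]
      rw [← mul_assoc (bcTop (μ (a+b+L))) X, hc, mul_assoc]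
    rw [e, pow_succ']
    refine (norm_mul_le _ _).trans ?_
    calc _ ≤ 1 * ‖(bcTop (bcRho lam (a+b) L) * X) * (bcTop (μ (a+b+L)) * X ^ k)‖ := by
          gcongr; exact bcTop_norm _
      _ ≤ ‖bcTop (bcRho lam (a+b) L) * X‖ * ‖bcTop (μ (a+b+L)) * X ^ k‖ := by rw [one_mul]; exact norm_mul_le _ _
      _ ≤ _ := by gcongr

lemma bc_D (T : BcOp) (hTn : ‖T‖ ≤ 1) (M : ℝ) (k R : ℕ) (hk : 1 ≤ k) (hR : 1 ≤ R)
    (hS : ∀ σ t : ℝ, 0 < σ → 0 < t → t ≤ σ / 4 → σ ≤ M → ‖T * (bcH σ * (1 - bcH t)) ^ k‖ ≤ (t / (6 * σ)) ^ k)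
    (t0 : ℝ) (ht0 : 0 < t0) (hM : ((R:ℝ) + 4 * k) * t0 / k ≤ M) :
    ‖T * (bcH (4 * k * t0) * (1 - bcH t0))‖ ≤ (exp 1 * (1/6)) ^ k / 3 + (k:ℝ) ^ (k+1) / R := by
  have hk0 : (0:ℝ) < k := by exact_mod_cast hk
  have hR0 : (0:ℝ) < R := by exact_mod_cast hR
  set G := bcH t0 with hG
  have hHG : ∀ s, Commute (bcH s) (1 - G) := fun s => (Commute.one_right _).sub_right (bcH_comm _ _)
  have hpw : ∀ (s : ℝ) (i : ℕ), 0 < s → 1 ≤ i → bcH s * (1 - G) ^ i = (bcH (s / i) * (1 - G)) ^ i := by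
    intro s i hs hi
    rw [(hHG _).mul_pow]
    congr 1
    obtain ⟨j, rfl⟩ : ∃ j, i = j + 1 := ⟨i - 1, by omega⟩
    rw [bcH_pow (by positivity)]
    congr 1
    push_cast
    field_simp
  have := bc_rec (fun i m => ‖T * (bcH (((m:ℝ) + 4 * k) * t0) * (1 - G) ^ i)‖) k R (1/6) (by norm_num) hk hR
    (by
      intro i m
      have e1 : bcH (((m:ℝ) + 4 * k) * t0) * G = bcH ((((m+1:ℕ):ℝ) + 4 * k) * t0) := by
        rw [hG, bcH_mul (by positivity) ht0.le]; congr 1; push_cast; ring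
      have : T * (bcH (((m:ℝ) + 4 * k) * t0) * (1 - G) ^ i) = T * (bcH (((m:ℝ) + 4 * k) * t0) * (1 - G) ^ (i+1))
          + T * (bcH ((((m+1:ℕ):ℝ) + 4 * k) * t0) * (1 - G) ^ i) := by
        rw [← e1, pow_succ', ← mul_add, mul_assoc, ← mul_add, ← add_mul]
        congr 3
        simp
      show ‖T * (bcH (((m:ℝ) + 4 * k) * t0) * (1 - G) ^ i)‖ ≤ _
      rw [this]
      exact norm_add_le _ _)
    (by
      intro m hm
      have hm' : (m:ℝ) ≤ R := by exact_mod_cast hm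
      show ‖T * (bcH (((m:ℝ) + 4 * k) * t0) * (1 - G) ^ k)‖ ≤ _
      rw [hpw _ k (by positivity) hk]
      refine (hS _ t0 (by positivity) ht0 ?_ ?_).trans (le_of_eq ?_)
      · rw [div_div, le_div_iff₀ (by positivity)]
        nlinarith [(Nat.cast_nonneg m : (0:ℝ) ≤ m)]
      · refine le_trans ?_ hM
        gcongr
      · congr 1
        field_simp)
    (by
      intro i hi hik
      have hi0 : (0:ℝ) < i := by exact_mod_cast hi
      have hik' : (i:ℝ) ≤ k := by exact_mod_cast hik
      show ‖T * (bcH (((R:ℝ) + 4 * k) * t0) * (1 - G) ^ i)‖ ≤ _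
      rw [hpw _ i (by positivity) hi]
      refine (norm_mul_le _ _).trans ?_
      calc _ ≤ 1 * ‖(bcH (((R:ℝ) + 4 * k) * t0 / i) * (1 - G)) ^ i‖ := by gcongr
        _ ≤ ‖bcH (((R:ℝ) + 4 * k) * t0 / i) * (1 - G)‖ ^ i := by rw [one_mul]; exact norm_pow_le' _ hi
        _ ≤ (t0 / (((R:ℝ) + 4 * k) * t0 / i)) ^ i := by
          gcongr
          apply bc_ktriv (by positivity) ht0
          rw [le_div_iff₀ hi0]
          nlinarith
        _ ≤ ((k:ℝ) / R) ^ i := by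
          have : t0 / (((R:ℝ) + 4 * k) * t0 / i) = i / (R + 4 * k) := by field_simp
          rw [this]
          gcongr
          linarith)
  simpa using this

lemma bc_DD (T : BcOp) (k : ℕ) (t0 : ℝ) (ht0 : 0 < t0) (hk : 1 ≤ k) (D : ℝ)
    (h : ‖T * (bcH (4 * k * t0) * (1 - bcH t0))‖ ≤ D) :
    ‖T * (bcH (4 * k * t0) - bcH (2 * (4 * k * t0)))‖ ≤ 4 * k * D := by
  have hk0 : (0:ℝ) < k := by exact_mod_cast hk
  have key : ∀ j : ℕ, ‖T * (bcH (4 * k * t0) - bcH (4 * k * t0 + j * t0))‖ ≤ j * D := by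
    intro j
    induction j with
    | zero => simp
    | succ j ih =>
      have e : T * (bcH (4 * k * t0) - bcH (4 * k * t0 + ((j+1:ℕ):ℝ) * t0)) =
          T * (bcH (4 * k * t0) * (1 - bcH t0)) + T * (bcH (4 * k * t0) - bcH (4 * k * t0 + j * t0)) * bcH t0 := by
        have e1 : bcH (4 * k * t0) * bcH t0 = bcH (4 * k * t0 + t0) := bcH_mul (by positivity) ht0.le
        have e2 : bcH (4 * k * t0 + j * t0) * bcH t0 = bcH (4 * k * t0 + ((j+1:ℕ):ℝ) * t0) := by
          rw [bcH_mul (by positivity) ht0.le]; congr 1; push_cast; ring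
        rw [← e2, mul_assoc T, sub_mul, ← mul_add]
        congr 1
        noncomm_ring
      rw [e]
      refine (norm_add_le _ _).trans ?_
      have : ‖T * (bcH (4 * k * t0) - bcH (4 * k * t0 + j * t0)) * bcH t0‖ ≤ j * D :=
        (norm_mul_le _ _).trans ((mul_le_of_le_one_right (norm_nonneg _) (bcH_norm _)).trans ih)
      push_cast
      linarith
  have := key (4 * k)
  push_cast at this
  rw [show 4 * (k:ℝ) * t0 + 4 * k * t0 = 2 * (4 * k * t0) by ring] at this
  exact this

end B7

section B8

open scoped BoundedContinuousFunction

lemma bc_step (T : BcOp) (hTn : ‖T‖ ≤ 1) (β : ℝ) (hβ : 2 < β) (L0 : ℕ) (hL0 : 1 ≤ L0)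
    (hS : ∀ k : ℕ, ∀ σ t : ℝ, 0 < σ → 0 < t → t ≤ σ / 4 → σ ≤ (β ^ (2 ^ k * L0))⁻¹ →
      ‖T * (bcH σ * (1 - bcH t)) ^ k‖ ≤ (t / (6 * σ)) ^ k) (k : ℕ) (hk : 2 ≤ k) (t : ℝ) (ht : 0 < t)
    (htβ : t ≤ (β ^ (2 ^ (k+1) * L0))⁻¹) :
    ‖T * (bcH t - bcH (2 * t))‖ ≤ 4 * k * ((exp 1 * (1/6)) ^ k / 3 + (k:ℝ) ^ (k+1) / 2 ^ (2 ^ k)) := by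
  have hk0 : (2:ℝ) ≤ k := by exact_mod_cast hk
  have hk0' : (0:ℝ) < k := by linarith
  set t0 := t / (4 * k) with ht0
  have e : 4 * (k:ℝ) * t0 = t := by rw [ht0]; field_simp
  have h1 := bc_D T hTn _ k (2 ^ (2 ^ k)) (by omega) Nat.one_le_two_pow (hS k) t0 (by positivity) (by
    push_cast
    set R : ℝ := 2 ^ (2 ^ k) with hR
    have hR1 : 1 ≤ R := one_le_pow₀ (by norm_num)
    have e2 : (R + 4 * k) * t0 / k = (R / (4 * k^2) + 1 / k) * t := by rw [ht0]; field_simp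
    have e3 : R / (4 * (k:ℝ)^2) + 1 / k ≤ R := by
      have a1 : R / (4 * (k:ℝ)^2) ≤ R / 2 := by gcongr; nlinarith
      have a2 : 1 / (k:ℝ) ≤ 1 / 2 := by gcongr
      linarith
    have e4 : R ≤ β ^ (2 ^ k * L0) := by
      calc R ≤ β ^ (2 ^ k) := by rw [hR]; gcongr
        _ ≤ β ^ (2 ^ k * L0) := pow_le_pow_right₀ (by linarith) (Nat.le_mul_of_pos_right _ (by omega))
    rw [e2]
    have hb : (0:ℝ) < β ^ (2 ^ k * L0) := by positivity
    calc _ ≤ β ^ (2 ^ k * L0) * (β ^ (2 ^ (k+1) * L0))⁻¹ := by gcongr; exact e3.trans e4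
      _ = _ := by
        rw [show 2 ^ (k+1) * L0 = 2 ^ k * L0 + 2 ^ k * L0 by ring, pow_add]
        field_simp)
  have h2 := bc_DD T k t0 (by positivity) (by omega) _ h1
  rw [e] at h2
  push_cast at h2
  exact h2

lemma bc_pow_big (k : ℕ) (hk : 7 ≤ k) : k ^ 2 + 4 * k ≤ 2 ^ k := by
  induction k, hk using Nat.le_induction with
  | base => norm_num
  | succ k hk ih =>
    have : 2 ^ (k+1) = 2 * 2 ^ k := by rw [pow_succ, mul_comm]
    rw [this]; nlinarith

lemma bc_Bk (k : ℕ) (hk : 7 ≤ k) :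
    2 ^ k * (4 * k * ((exp 1 * (1/6)) ^ k / 3 + (k:ℝ) ^ (k+1) / 2 ^ (2 ^ k))) ≤ 4/3 * (k * (exp 1 / 3) ^ k) + 4 * (1/2) ^ k := by
  have e1 : (2:ℝ) ^ k * (exp 1 * (1/6)) ^ k = (exp 1 / 3) ^ k := by rw [← mul_pow]; congr 1; ring
  have h2 : (2:ℝ) ^ k * (k * (k:ℝ) ^ (k+1)) / 2 ^ (2 ^ k) ≤ (1/2) ^ k := by
    rw [div_le_iff₀ (by positivity), one_div, inv_pow, inv_mul_eq_div, le_div_iff₀ (by positivity)]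
    have : (k:ℝ) ≤ 2 ^ k := by exact_mod_cast Nat.lt_two_pow_self.le
    calc (2:ℝ) ^ k * (k * (k:ℝ) ^ (k+1)) * 2 ^ k ≤ (2:ℝ) ^ k * (2 ^ k * (2 ^ k) ^ (k+1)) * 2 ^ k := by gcongr
      _ = 2 ^ (k ^ 2 + 4 * k) := by
        rw [← pow_mul, ← pow_add, ← pow_add, ← pow_add]; congr 1; ring
      _ ≤ 2 ^ (2 ^ k) := pow_le_pow_right₀ (by norm_num) (bc_pow_big k hk)
  calc _ = 4/3 * (k * ((2:ℝ) ^ k * (exp 1 * (1/6)) ^ k)) + 4 * ((2:ℝ) ^ k * (k * (k:ℝ) ^ (k+1)) / 2 ^ (2 ^ k)) := by ring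
    _ ≤ _ := by rw [e1]; gcongr

lemma bc_cauchy (T : BcOp) (b : ℕ → ℝ) (L0 : ℕ)
    (hb : ∀ k : ℕ, 7 ≤ k → ∀ j : ℕ, 2 ^ (k+2) * L0 ≤ j → ‖T * (bcH ((1/2) ^ (j+1)) - bcH ((1/2) ^ j))‖ ≤ b k)
    (hB : ∀ k, 7 ≤ k → 2 ^ k * b k ≤ 4/3 * (k * (exp 1 / 3) ^ k) + 4 * (1/2) ^ k) :
    CauchySeq fun i : ℕ => T * bcH ((1/2) ^ (2 ^ (i + 7 + 2) * L0)) := by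
  have tel : ∀ k, 7 ≤ k → ∀ m : ℕ, ‖T * bcH ((1/2) ^ (2 ^ (k+2) * L0 + m)) - T * bcH ((1/2) ^ (2 ^ (k+2) * L0))‖ ≤ m * b k := by
    intro k hk m
    induction m with
    | zero => simp
    | succ m ih =>
      have h1 := hb k hk (2 ^ (k+2) * L0 + m) (by omega)
      rw [mul_sub, add_assoc] at h1
      have := norm_sub_le_norm_sub_add_norm_sub (T * bcH ((1/2) ^ (2 ^ (k+2) * L0 + (m+1)))) (T * bcH ((1/2) ^ (2 ^ (k+2) * L0 + m))) (T * bcH ((1/2) ^ (2 ^ (k+2) * L0)))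
      push_cast
      linarith
  have hs : Summable fun k : ℕ => 4 * (L0:ℝ) * (4/3 * (k * (exp 1 / 3) ^ k) + 4 * (1/2:ℝ) ^ k) := by
    apply Summable.mul_left
    apply Summable.add
    · apply Summable.mul_left
      have := summable_pow_mul_geometric_of_norm_lt_one (R := ℝ) 1 (r := exp 1 / 3) (by
        rw [norm_of_nonneg (by positivity), div_lt_one (by norm_num)]
        linarith [exp_one_lt_d9])
      simpa using this
    · exact (summable_geometric_of_lt_one (by norm_num) (by norm_num)).mul_left _
  refine cauchySeq_of_dist_le_of_summable _ ?_ ((summable_nat_add_iff 7).mpr hs)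
  intro i
  have h1 := tel (i + 7) (by omega) (2 ^ (i+7+2) * L0)
  rw [show 2 ^ (i + 7 + 2) * L0 + 2 ^ (i + 7 + 2) * L0 = 2 ^ (i + 1 + 7 + 2) * L0 by ring] at h1
  rw [dist_comm, dist_eq_norm]
  refine h1.trans ?_
  have h2 := hB (i+7) (by omega)
  calc _ = 4 * (L0:ℝ) * (2 ^ (i+7) * b (i+7)) := by push_cast; ring
    _ ≤ _ := by gcongr

lemma bc_weak (μ : Measure ℝ) [IsProbabilityMeasure μ] (φ : ℝ →ᵇ ℝ) (r : ℕ → ℝ) (hr : Filter.Tendsto r Filter.atTop (nhds 0)) :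
    Filter.Tendsto (fun i => ∫ x, φ x ∂(μ.conv (bcG (r i ^ 2)))) Filter.atTop (nhds (∫ x, φ x ∂μ)) := by
  have e : ∀ i, ∫ x, φ x ∂(μ.conv (bcG (r i ^ 2))) = ∫ x, ∫ u, φ (x + r i * u) ∂(bcG 1) ∂μ := by
    intro i
    rw [integral_conv (bc_integrable_of_bdd _ _ φ.continuous ‖φ‖ φ.norm_coe_le_norm)]
    congr 1
    ext x
    have := bcG_map (r := r i) (s := 1) zero_le_one
    rw [mul_one] at this
    have hcc : Continuous (fun u => φ (x + u)) := φ.continuous.comp (by fun_prop)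
    rw [← this, integral_map (by fun_prop) hcc.aestronglyMeasurable]
  simp_rw [e]
  have hin : ∀ x, Filter.Tendsto (fun i => ∫ u, φ (x + r i * u) ∂(bcG 1)) Filter.atTop (nhds (φ x)) := by
    intro x
    have := tendsto_integral_of_dominated_convergence (μ := bcG 1) (F := fun i u => φ (x + r i * u)) (f := fun _ => φ x) (fun _ => ‖φ‖)
      (fun i => (φ.continuous.comp (by fun_prop)).aestronglyMeasurable) (integrable_const _)
      (fun i => by filter_upwards with u; exact φ.norm_coe_le_norm _)
      (by
        filter_upwards with u
        refine (φ.continuous.tendsto x).comp ?_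
        have := (hr.mul_const u).const_add x
        simpa using this)
    simpa using this
  refine tendsto_integral_of_dominated_convergence (fun _ => ‖φ‖) ?_ (integrable_const _) ?_ ?_
  · intro i
    have : Continuous fun x => ∫ u, φ (x + r i * u) ∂(bcG 1) := by
      refine continuous_of_dominated (bound := fun _ => ‖φ‖) ?_ ?_ (integrable_const _) ?_
      · intro z
        exact (φ.continuous.comp (by fun_prop)).aestronglyMeasurable
      · intro z
        filter_upwards with x
        exact φ.norm_coe_le_norm _
      · filter_upwards with x
        exact φ.continuous.comp (by fun_prop)
    exact this.aestronglyMeasurable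
  · intro i
    filter_upwards with x
    have := norm_integral_le_of_norm_le_const (μ := bcG 1) (f := fun u => φ (x + r i * u)) (C := ‖φ‖)
      (by filter_upwards with u; exact φ.norm_coe_le_norm _)
    simpa using this
  · filter_upwards with x
    exact hin x

lemma bc_ac (μ : Measure ℝ) [IsProbabilityMeasure μ]
    (h : ∀ ε : ℝ, 0 < ε → ∃ s : ℝ, 0 < s ∧ ∀ φ : ℝ →ᵇ ℝ, |∫ x, φ x ∂μ - ∫ x, φ x ∂(μ.conv (bcG s))| ≤ ε * ‖φ‖) :
    μ ≪ volume := by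
  refine Measure.AbsolutelyContinuous.mk fun A hA hA0 => ?_
  rw [hA.measure_eq_iSup_isCompact]
  simp only [ENNReal.iSup_eq_zero]
  intro K hKA hK
  have hK0 : volume K = 0 := measure_mono_null hKA hA0
  by_contra hne
  have hpos : 0 < μ.real K := by
    rw [measureReal_def]; exact ENNReal.toReal_pos hne (measure_ne_top _ _)
  obtain ⟨s, hs, hφ⟩ := h (μ.real K / 4) (by positivity)
  have hν0 : (μ.conv (bcG s)) K = 0 := by
    rw [bcM_eq μ hs]
    exact withDensity_absolutelyContinuous _ _ hK0
  obtain ⟨U, hKU, hU, hUε⟩ := K.exists_isOpen_lt_of_lt (μ := μ.conv (bcG s)) (ENNReal.ofReal (μ.real K / 4)) (by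
    rw [hν0]; exact ENNReal.ofReal_pos.mpr (by positivity))
  obtain ⟨f, hf1, hf0, _, hf01⟩ := exists_continuous_one_zero_of_isCompact hK hU.isClosed_compl (by
    rw [Set.disjoint_compl_right_iff_subset]; exact hKU)
  set φ : ℝ →ᵇ ℝ := BoundedContinuousFunction.ofNormedAddCommGroup f f.continuous 1 (fun x => by
    rw [norm_eq_abs, abs_of_nonneg (hf01 x).1]; exact (hf01 x).2) with hφd
  have hφn : ‖φ‖ ≤ 1 := BoundedContinuousFunction.norm_ofNormedAddCommGroup_le _ zero_le_one _
  have a1 : μ.real K ≤ ∫ x, φ x ∂μ := by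
    rw [← integral_indicator_one hK.measurableSet]
    refine integral_mono ((integrable_const 1).indicator hK.measurableSet) (bc_integrable_of_bdd _ _ φ.continuous ‖φ‖ φ.norm_coe_le_norm) fun x => ?_
    by_cases hx : x ∈ K
    · rw [Set.indicator_of_mem hx]
      exact (hf1 hx).ge
    · rw [Set.indicator_of_notMem hx]
      exact (hf01 x).1
  have a2 : ∫ x, φ x ∂(μ.conv (bcG s)) ≤ (μ.conv (bcG s)).real U := by
    rw [← integral_indicator_one hU.measurableSet]
    refine integral_mono (bc_integrable_of_bdd _ _ φ.continuous ‖φ‖ φ.norm_coe_le_norm) ((integrable_const 1).indicator hU.measurableSet) fun x => ?_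
    by_cases hx : x ∈ U
    · rw [Set.indicator_of_mem hx]
      exact (hf01 x).2
    · rw [Set.indicator_of_notMem hx]
      exact (hf0 hx).le
  have a3 : (μ.conv (bcG s)).real U ≤ μ.real K / 4 := by
    rw [measureReal_def]
    exact ENNReal.toReal_le_of_le_ofReal (by positivity) hUε.le
  have a4 := (abs_le.mp (hφ φ)).2
  have a5 : μ.real K / 4 * ‖φ‖ ≤ μ.real K / 4 := mul_le_of_le_one_right (by positivity) hφn
  linarith

lemma bc_final (lam β : ℝ) (hl0 : 0 < lam) (hl1 : lam < 1) (hβ : 2 < β) (hβ4 : β ≤ 2.001) (L0 : ℕ) (hL0 : 1 ≤ L0)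
    (hgood : ∀ L, L0 ≤ L → ∀ v : ℝ, 0 < v → v ≤ (β ^ (2 * L))⁻¹ → ∃ b : ℕ,
      v / (lam ^ 2) ^ (b + L) ≤ (β ^ L)⁻¹ ∧
      bcE (bcRho lam 0 L) (v / (lam ^ 2) ^ b / 4) - bcE (bcRho lam 0 L) (5 * (v / (lam ^ 2) ^ b) / 4) ≤ 1/144)
    (μ : ℕ → Measure ℝ) [∀ a, IsProbabilityMeasure (μ a)]
    (hμ : ∀ a, μ a = (bcCoin (lam ^ a)).conv (μ (a+1))) : μ 0 ≪ volume := by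
  have hS : ∀ k : ℕ, ∀ σ t : ℝ, 0 < σ → 0 < t → t ≤ σ / 4 → σ ≤ (β ^ (2 ^ k * L0))⁻¹ →
      ‖bcTop (μ 0) * (bcH σ * (1 - bcH t)) ^ k‖ ≤ (t / (6 * σ)) ^ k := by
    intro k σ t hσ ht htσ hσM
    exact bc_S lam β hl0 hl1 L0 hgood μ hμ σ t hσ ht htσ k 0 (by simpa using hσM)
  have hC := bc_cauchy (bcTop (μ 0)) (fun k => 4 * k * ((exp 1 * (1/6)) ^ k / 3 + (k:ℝ) ^ (k+1) / 2 ^ (2 ^ k))) L0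
    (by
      intro k hk j hj
      have := bc_step (bcTop (μ 0)) (bcTop_norm _) β hβ L0 hL0 hS k (by omega) ((1/2) ^ (j+1)) (by positivity) (by
        rw [one_div, inv_pow]
        apply inv_anti₀ (by positivity)
        calc β ^ (2 ^ (k+1) * L0) ≤ 4 ^ (2 ^ (k+1) * L0) := by gcongr; linarith
          _ = 2 ^ (2 ^ (k+2) * L0) := by
            rw [show (4:ℝ) = 2 ^ 2 by norm_num, ← pow_mul]; congr 1; ring
          _ ≤ 2 ^ (j+1) := pow_le_pow_right₀ (by norm_num) (by omega))
      rw [show (2:ℝ) * (1/2) ^ (j+1) = (1/2) ^ j by rw [pow_succ]; ring] at this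
      exact this)
    (fun k hk => bc_Bk k hk)
  refine bc_ac (μ 0) fun ε hε => ?_
  obtain ⟨N, hN⟩ := Metric.cauchySeq_iff'.mp hC ε hε
  refine ⟨(1/2) ^ (2 ^ (N + 7 + 2) * L0), by positivity, fun φ => ?_⟩
  have hev : ∀ s : ℝ, (bcTop (μ 0) * bcH s).ev φ 0 = ∫ x, φ x ∂((μ 0).conv (bcG s)) := by
    intro s
    have : bcTop (μ 0) * bcH s = bcTop ((μ 0).conv (bcG s)) := (bcTop_mul _ _).symm
    rw [this, bcTop_apply]
    simp
  have hw := bc_weak (μ 0) φ (fun i => (1/2) ^ (2 ^ (i + 7 + 1) * L0)) (by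
    refine (tendsto_pow_atTop_nhds_zero_of_lt_one (by norm_num : (0:ℝ) ≤ 1/2) (by norm_num)).comp ?_
    refine Filter.tendsto_atTop_mono (fun i => ?_) Filter.tendsto_id
    calc i ≤ 2 ^ i := Nat.lt_two_pow_self.le
      _ ≤ 2 ^ (i + 7 + 1) := Nat.pow_le_pow_right (by norm_num) (by omega)
      _ ≤ _ := Nat.le_mul_of_pos_right _ (by omega))
  have hsub := (hw.sub_const (∫ x, φ x ∂((μ 0).conv (bcG ((1/2) ^ (2 ^ (N + 7 + 2) * L0)))))).abs
  refine le_of_tendsto hsub ?_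
  filter_upwards [Filter.eventually_ge_atTop N] with i hi
  have h1 := hN i hi
  rw [dist_eq_norm] at h1
  have e : ((1/2:ℝ) ^ (2 ^ (i + 7 + 1) * L0)) ^ 2 = (1/2) ^ (2 ^ (i + 7 + 2) * L0) := by
    rw [← pow_mul]; congr 1; ring
  rw [e, ← hev, ← hev]
  have h2 := (BcOp.ev_norm _ φ).trans (mul_le_mul_of_nonneg_right h1.le (norm_nonneg φ))
  rw [BcOp.ev_sub] at h2
  exact (BoundedContinuousFunction.norm_coe_le_norm _ 0).trans h2

end B8

section B9

noncomputable def bcDig (n : ℕ) (x : ℝ) : ℝ := if ⌊x * 2 ^ (n + 1)⌋ % 2 = 1 then (1 : ℝ) else -1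

noncomputable def bcSer (lam x : ℝ) : ℝ := ∑' n : ℕ, bcDig n x * lam ^ n

lemma bcDig_abs (n : ℕ) (x : ℝ) : |bcDig n x| = 1 := by
  unfold bcDig; split_ifs <;> simp

lemma bcDig_meas (n : ℕ) : Measurable (bcDig n) := by
  unfold bcDig
  refine Measurable.ite ?_ measurable_const measurable_const
  have : Measurable fun x : ℝ => ⌊x * 2 ^ (n + 1)⌋ := Int.measurable_floor.comp (by fun_prop)
  exact this (MeasurableSet.of_discrete (s := {z : ℤ | z % 2 = 1}))

lemma bcSer_summable {lam : ℝ} (h0 : 0 < lam) (h1 : lam < 1) (x : ℝ) : Summable fun n : ℕ => bcDig n x * lam ^ n := by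
  refine Summable.of_norm_bounded (summable_geometric_of_lt_one h0.le h1) fun n => ?_
  rw [norm_mul, norm_eq_abs, bcDig_abs, one_mul, norm_of_nonneg (by positivity)]

lemma bcSer_meas {lam : ℝ} (h0 : 0 < lam) (h1 : lam < 1) : Measurable (bcSer lam) := by
  refine measurable_of_tendsto_metrizable (f := fun N x => ∑ n ∈ Finset.range N, bcDig n x * lam ^ n) ?_ ?_
  · intro N
    exact Finset.measurable_fun_sum _ fun n _ => (bcDig_meas n).mul_const _
  · rw [tendsto_pi_nhds]
    intro x
    exact (bcSer_summable h0 h1 x).hasSum.tendsto_sum_nat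

lemma bcDig_half (n : ℕ) (x : ℝ) : bcDig (n+1) (2⁻¹ * x) = bcDig n x := by
  unfold bcDig
  have : 2⁻¹ * x * 2 ^ (n + 1 + 1) = x * 2 ^ (n+1) := by rw [pow_succ]; ring
  rw [this]

lemma bcDig_half' (n : ℕ) (x : ℝ) : bcDig (n+1) (2⁻¹ * x + 1/2) = bcDig n x := by
  unfold bcDig
  have : (2⁻¹ * x + 1/2) * 2 ^ (n + 1 + 1) = x * 2 ^ (n+1) + ((2 * 2 ^ n : ℤ) : ℝ) := by push_cast; rw [pow_succ]; ring
  rw [this, Int.floor_add_intCast, Int.add_mul_emod_self_left]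

lemma bcSer_half {lam : ℝ} (h0 : 0 < lam) (h1 : lam < 1) {x : ℝ} (hx : x ∈ Set.Ico (0:ℝ) 1) :
    bcSer lam (2⁻¹ * x) = lam * bcSer lam x + (-1) := by
  unfold bcSer
  rw [(bcSer_summable h0 h1 _).tsum_eq_zero_add]
  simp_rw [bcDig_half, pow_succ, ← mul_assoc]
  rw [tsum_mul_right]
  have : bcDig 0 (2⁻¹ * x) = -1 := by
    unfold bcDig
    have : ⌊2⁻¹ * x * 2 ^ (0 + 1)⌋ = 0 := by
      rw [Int.floor_eq_zero_iff]; constructor <;> norm_num <;> linarith [hx.1, hx.2]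
    rw [this]; norm_num
  rw [this]; simp; ring

lemma bcSer_half' {lam : ℝ} (h0 : 0 < lam) (h1 : lam < 1) {x : ℝ} (hx : x ∈ Set.Ico (0:ℝ) 1) :
    bcSer lam (2⁻¹ * x + 1/2) = lam * bcSer lam x + 1 := by
  unfold bcSer
  rw [(bcSer_summable h0 h1 _).tsum_eq_zero_add]
  simp_rw [bcDig_half', pow_succ, ← mul_assoc]
  rw [tsum_mul_right]
  have : bcDig 0 (2⁻¹ * x + 1/2) = 1 := by
    unfold bcDig
    have : ⌊(2⁻¹ * x + 1/2) * 2 ^ (0 + 1)⌋ = 1 := by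
      rw [Int.floor_eq_iff]; push_cast; constructor <;> linarith [hx.1, hx.2]
    rw [this]; norm_num
  rw [this]; simp; ring

lemma bc_unif_map (c : ℝ) : (2⁻¹ : ENNReal) • (volume.restrict (Set.Ico (0:ℝ) 1)).map (fun x => 2⁻¹ * x + c) =
    volume.restrict (Set.Ico c (c + 1/2)) := by
  have hm : Measurable (fun x : ℝ => 2⁻¹ * x + c) := by fun_prop
  have hv : (volume : Measure ℝ).map (fun x => 2⁻¹ * x + c) = (2 : ENNReal) • volume := by
    have e : (fun x : ℝ => 2⁻¹ * x + c) = (fun x => x + c) ∘ (fun x => 2⁻¹ * x) := rfl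
    rw [e, ← Measure.map_map (by fun_prop) (by fun_prop), Real.map_volume_mul_left (by norm_num), Measure.map_smul,
      map_add_right_eq_self]
    norm_num
  ext s hs
  rw [Measure.smul_apply, Measure.map_apply hm hs, Measure.restrict_apply (hm hs), Measure.restrict_apply hs]
  have e : (fun x : ℝ => 2⁻¹ * x + c) ⁻¹' s ∩ Set.Ico 0 1 = (fun x : ℝ => 2⁻¹ * x + c) ⁻¹' (s ∩ Set.Ico c (c + 1/2)) := by
    ext x
    simp only [Set.mem_inter_iff, Set.mem_preimage, Set.mem_Ico, and_congr_right_iff]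
    intro _
    constructor <;> rintro ⟨a, b⟩ <;> constructor <;> linarith
  rw [e, ← Measure.map_apply hm (hs.inter measurableSet_Ico), hv, Measure.smul_apply, smul_eq_mul, smul_eq_mul, ← mul_assoc,
    ENNReal.inv_mul_cancel (by norm_num) (by norm_num), one_mul]

lemma bc_unif_split : volume.restrict (Set.Ico (0:ℝ) 1) =
    (2⁻¹ : ENNReal) • (volume.restrict (Set.Ico (0:ℝ) 1)).map (fun x => 2⁻¹ * x + 1/2) +
    (2⁻¹ : ENNReal) • (volume.restrict (Set.Ico (0:ℝ) 1)).map (fun x => 2⁻¹ * x + 0) := by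
  rw [bc_unif_map, bc_unif_map, add_comm, ← Measure.restrict_union _ measurableSet_Ico]
  · congr 1
    ext x
    simp only [Set.mem_union, Set.mem_Ico]
    constructor
    · rintro ⟨a, b⟩
      by_cases h : x < 1/2
      · left; constructor <;> linarith
      · right; constructor <;> linarith
    · rintro (⟨a, b⟩ | ⟨a, b⟩) <;> constructor <;> linarith
  · rw [Set.disjoint_left]
    rintro x ⟨a, b⟩ ⟨c, d⟩
    linarith

lemma bernoulliConv_prob {lam : ℝ} (h0 : 0 < lam) (h1 : lam < 1) : IsProbabilityMeasure (bernoulliConv lam) := by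
  have : IsProbabilityMeasure (volume.restrict (Set.Ico (0:ℝ) 1)) := ⟨by simp⟩
  exact Measure.isProbabilityMeasure_map (bcSer_meas h0 h1).aemeasurable

lemma bernoulliConv_self {lam : ℝ} (h0 : 0 < lam) (h1 : lam < 1) :
    bernoulliConv lam = (bcCoin 1).conv ((bernoulliConv lam).map (fun x => lam * x)) := by
  have hp := bernoulliConv_prob h0 h1
  have hS := bcSer_meas h0 h1
  have hdef : bernoulliConv lam = (volume.restrict (Set.Ico (0:ℝ) 1)).map (bcSer lam) := rfl
  have hpm : IsProbabilityMeasure ((bernoulliConv lam).map (fun x => lam * x)) := Measure.isProbabilityMeasure_map (by fun_prop)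
  unfold bcCoin
  rw [Measure.add_conv, Measure.conv_smul_left, Measure.conv_smul_left, Measure.dirac_conv, Measure.dirac_conv]
  rw [hdef]
  conv_lhs => rw [bc_unif_split]
  rw [Measure.map_add _ _ hS, Measure.map_smul, Measure.map_smul, Measure.map_map (by fun_prop) hS,
    Measure.map_map hS (by fun_prop), Measure.map_map hS (by fun_prop),
    Measure.map_map (by fun_prop) (by fun_prop), Measure.map_map (by fun_prop) (by fun_prop)]
  congr 2
  · refine Measure.map_congr ?_
    filter_upwards [ae_restrict_mem measurableSet_Ico] with x hx
    simp only [Function.comp]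
    rw [bcSer_half' h0 h1 hx]; ring
  · refine Measure.map_congr ?_
    filter_upwards [ae_restrict_mem measurableSet_Ico] with x hx
    simp only [Function.comp]
    rw [add_zero, bcSer_half h0 h1 hx]; ring

lemma bc_main (m : ℕ) (hm : 12 ≤ m) (lam : ℝ) (hl : lam ∈ Set.Ioo (1/2:ℝ) 1) (h : lam ^ m * (lam - 2) = lam - 1) :
    bernoulliConv lam ≪ volume := by
  have hl0 : 0 < lam := by linarith [hl.1]
  have hl1 := hl.2
  obtain ⟨β, hβ, hβ2, hβ0⟩ := bc_beta m hm
  obtain ⟨c1, hc1, hsep⟩ := bc_sep m hm β hβ hβ0 lam hl0 hl1 h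
  obtain ⟨L0, hL0, hgood⟩ := bc_good lam β c1 hl0 hl1 (bc_lam_lb m hm lam hl h) hβ hβ2 hc1 hsep
  have hp := bernoulliConv_prob hl0 hl1
  have hmp : ∀ a : ℕ, IsProbabilityMeasure ((bernoulliConv lam).map (fun x => lam ^ a * x)) := fun a =>
    Measure.isProbabilityMeasure_map (by fun_prop)
  have hpm : IsProbabilityMeasure ((bernoulliConv lam).map (fun x => lam * x)) := Measure.isProbabilityMeasure_map (by fun_prop)
  have := bc_final lam β hl0 hl1 hβ hβ2 L0 hL0 hgood (fun a => (bernoulliConv lam).map (fun x => lam ^ a * x)) (by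
    intro a
    show (bernoulliConv lam).map (fun x => lam ^ a * x) = _
    conv_lhs => rw [bernoulliConv_self hl0 hl1]
    rw [bc_map_conv, bcCoin_map, mul_one, Measure.map_map (by fun_prop) (by fun_prop)]
    congr 2
    ext x
    simp only [Function.comp, pow_succ]
    ring)
  simpa using this

end B9

theorem statement17 (n : ℕ) (hn : 13 ≤ n) :
    (∃ lam ∈ Set.Ioo (1 / 2 : ℝ) 1, lam ^ n - 2 * lam ^ (n - 1) - lam + 1 = 0) ∧
    ∀ lam ∈ Set.Ioo (1 / 2 : ℝ) 1, lam ^ n - 2 * lam ^ (n - 1) - lam + 1 = 0 →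
      bernoulliConv lam ≪ volume := by
  obtain ⟨m, rfl⟩ : ∃ m, n = m + 1 := ⟨n - 1, by omega⟩
  rw [Nat.add_sub_cancel]
  refine ⟨bc_root_exists m (by omega), fun lam hl h => bc_main m (by omega) lam hl ?_⟩
  rw [pow_succ] at h
  linarith
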